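/- arXiv:1407.6086 — 3 statements merged into one kernel-verified Lean document; each statement's English description precedes it below -/
import Mathlib

section
/- Let b be prime, let m ≤ n be positive integers, let p ∈ 𝔽_b[x] with deg(p) = n, and let q = (q_1,…,q_s) ∈ 𝔽_b[x]^s. Let 𝒫(q,p) = {z_0,…,z_{b^m−1}} be the associated higher order polynomial lattice point set and 𝒫^⊥(q,p) its dual polynomial lattice. Then for every k ∈ ℕ₀^s, Σ_{h=0}^{b^m−1} W_k(z_h) = b^m if k ∈ 𝒫^⊥(q,p), and Σ_{h=0}^{b^m−1} W_k(z_h) = 0 otherwise. -/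
open scoped Classical

namespace QMC

/-- the `i`-th `b`-adic digit of `k`. -/
def digit (b k i : ℕ) : ℕ := k / b ^ i % b

/-- the `k`-th character `W_k` on `G = (ℤ/bℤ)^ℕ`, where `z i = ζ_{i+1}`. -/
noncomputable def W (b k : ℕ) (z : ℕ → ZMod b) : ℂ :=
  Complex.exp (2 * Real.pi * Complex.I / b) ^
    ∑ i ∈ Finset.range (k + 1), digit b k i * (z i).val

/-- the `k`-th character on `G^s`. -/
noncomputable def Wvec (b : ℕ) {s : ℕ} (k : Fin s → ℕ) (z : Fin s → ℕ → ZMod b) : ℂ :=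
  ∏ j, W b (k j) (z j)

/-- the polynomial over `𝔽_b` whose coefficients are the `b`-adic digits of `h`. -/
noncomputable def natPoly (b h : ℕ) : Polynomial (ZMod b) :=
  ∑ i ∈ Finset.range (h + 1), Polynomial.C ((digit b h i : ℕ) : ZMod b) * Polynomial.X ^ i

/-- the truncated polynomial `tr_n(k)(x) = κ₀ + κ₁ x + ⋯ + κ_{n-1} x^{n-1}`. -/
noncomputable def trunc (b n k : ℕ) : Polynomial (ZMod b) :=
  ∑ i ∈ Finset.range n, Polynomial.C ((digit b k i : ℕ) : ZMod b) * Polynomial.X ^ i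

/-- the point `v_n(h q / p) ∈ G` of a higher order polynomial lattice point set:
its `i`-th entry (for `i < n`) is the coefficient `t_{i+1}` of `x^{-(i+1)}` in the
Laurent expansion of `h q / p` in `x^{-1}`, which is the coefficient of `x^{n-(i+1)}`
in the Euclidean quotient `(xⁿ h q) / p`; entries with `i ≥ n` are `0`. -/
noncomputable def hoPoint (b : ℕ) [Fact b.Prime] (p q : Polynomial (ZMod b)) (n h : ℕ) :
    ℕ → ZMod b := fun i =>
  if i < n then ((Polynomial.X ^ n * natPoly b h * q) / p).coeff (n - (i + 1)) else 0

/-- membership in the dual polynomial lattice `𝒫^⊥(q,p)`: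
`tr_n(k₁)q₁ + ⋯ + tr_n(k_s)q_s ≡ a (mod p)` for some `a` with `deg(a) < n - m`. -/
def inDualLattice (b : ℕ) {s : ℕ} (m n : ℕ) (p : Polynomial (ZMod b))
    (q : Fin s → Polynomial (ZMod b)) (k : Fin s → ℕ) : Prop :=
  ∃ a : Polynomial (ZMod b), a.degree < ((n - m : ℕ) : WithBot ℕ) ∧
    p ∣ (∑ j, trunc b n (k j) * q j - a)

/-!
Write `res_p f` for the coefficient of `x⁻¹` in `f / p`. The `i`-th entry of `v_n(h q / p)` is
`res_p (xⁱ h q)`, so by linearity `W_k(z_h) = ψ (res_p (h T))` with `T = ∑ tr_n(k_j) q_j` and `ψ`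
the standard additive character of `𝔽_b`. As `h` runs over all polynomials of degree less than `m`,
orthogonality of characters gives `b ^ m` if `res_p (xⁱ T) = 0` for all `i < m`, and `0` otherwise.
These residues are the coefficients of the polynomial part of `xᵐ (T mod p) / p`, which vanishes
exactly when `deg (T mod p) < deg p - m`.
-/

section Residue

open Polynomial

variable {K : Type*} [Field K]

theorem polynomial_div_eq_of_mul_add_eq {f p u r : K[X]} (h : p * u + r = f)
    (hr : r.degree < p.degree) : f / p = u := by
  have hp : p ≠ 0 := ne_zero_of_degree_gt hr
  have hmod : f % p = r := by
    rw [mod_eq_of_dvd_sub (p₂ := r) ⟨u, by rw [← h, add_sub_cancel_right]⟩,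
      (mod_eq_self_iff hp).2 hr]
  refine mul_left_cancel₀ hp (add_right_cancel (b := r) ?_)
  rw [h, ← hmod, EuclideanDomain.div_add_mod]

theorem polynomial_add_div (f g p : K[X]) : (f + g) / p = f / p + g / p := by
  rcases eq_or_ne p 0 with rfl | hp
  · simp
  refine polynomial_div_eq_of_mul_add_eq (r := f % p + g % p) ?_ ?_
  · rw [mul_add, add_add_add_comm, EuclideanDomain.div_add_mod, EuclideanDomain.div_add_mod]
  · rw [← add_mod]
    exact degree_mod_lt _ hp

theorem polynomial_smul_div (c : K) (f p : K[X]) : (c • f) / p = c • (f / p) := by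
  rcases eq_or_ne p 0 with rfl | hp
  · simp
  refine polynomial_div_eq_of_mul_add_eq (r := c • (f % p)) ?_ ?_
  · rw [mul_smul_comm, ← smul_add, EuclideanDomain.div_add_mod]
  · exact (degree_smul_le _ _).trans_lt (degree_mod_lt f hp)

/-- The residue `res_p f` at infinity: the coefficient of `x⁻¹` in the expansion of `f / p` as a
Laurent series in `x⁻¹`, read off as the constant coefficient of the Euclidean quotient
`(x f) / p`. -/
noncomputable def residue (p : K[X]) : K[X] →ₗ[K] K where
  toFun f := (X * f / p).coeff 0
  map_add' f g := by rw [mul_add, polynomial_add_div, coeff_add]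
  map_smul' c f := by rw [mul_smul_comm, polynomial_smul_div, coeff_smul, RingHom.id_apply]

theorem residue_apply (p f : K[X]) : residue p f = (X * f / p).coeff 0 := rfl

theorem residue_mul_self (p f : K[X]) : residue p (p * f) = 0 := by
  rcases eq_or_ne p 0 with rfl | hp
  · rw [zero_mul, map_zero]
  · rw [residue_apply, mul_left_comm, mul_div_cancel_left₀ _ hp, coeff_X_mul_zero]

theorem residue_mul_mod (p g f : K[X]) : residue p (g * (f % p)) = residue p (g * f) := by
  conv_rhs => rw [← EuclideanDomain.div_add_mod f p, mul_add, mul_left_comm, map_add,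
    residue_mul_self, zero_add]

theorem degree_X_pow_mul_div_lt {p r : K[X]} (hr : r.degree < p.degree) (a : ℕ) :
    (X ^ a * r / p).degree < (a : WithBot ℕ) := by
  have hp : p ≠ 0 := ne_zero_of_degree_gt hr
  rcases lt_or_ge (X ^ a * r).degree p.degree with hlt | hle
  · rw [(Polynomial.div_eq_zero_iff hp).2 hlt, degree_zero]
    exact WithBot.bot_lt_coe a
  · have hquot : p.degree + (X ^ a * r / p).degree < p.degree + a := by
      rw [degree_add_div hp hle, degree_mul, degree_X_pow, add_comm]
      exact WithBot.add_lt_add_right WithBot.coe_ne_bot hr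
    exact lt_of_add_lt_add_left hquot

theorem coeff_X_pow_mul_div (p f : K[X]) (a : ℕ) : (X ^ a * f / p).coeff a = (f / p).coeff 0 := by
  rcases eq_or_ne p 0 with rfl | hp
  · simp
  have hsplit : X ^ a * f = p * (X ^ a * (f / p)) + X ^ a * (f % p) := by
    rw [mul_left_comm, ← mul_add, EuclideanDomain.div_add_mod]
  rw [hsplit, polynomial_add_div, mul_div_cancel_left₀ _ hp, coeff_add,
    coeff_eq_zero_of_degree_lt (degree_X_pow_mul_div_lt (degree_mod_lt f hp) a), add_zero,
    coeff_X_pow_mul', if_pos le_rfl, Nat.sub_self]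

theorem coeff_X_pow_mul_div_eq_residue (p f : K[X]) {i n : ℕ} (hi : i < n) :
    (X ^ n * f / p).coeff (n - (i + 1)) = residue p (X ^ i * f) := by
  have hsplit : X ^ n * f = X ^ (n - (i + 1)) * (X * (X ^ i * f)) := by
    rw [← mul_assoc X, ← pow_succ', ← mul_assoc, ← pow_add, Nat.sub_add_cancel hi]
  rw [hsplit, coeff_X_pow_mul_div, residue_apply]

theorem forall_residue_X_pow_mul_eq_zero_iff {p : K[X]} (hp : p ≠ 0) (f : K[X]) (m : ℕ) :
    (∀ i < m, residue p (X ^ i * f) = 0) ↔ (X ^ m * (f % p)).degree < p.degree := by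
  rw [← Polynomial.div_eq_zero_iff hp]
  have hres {i : ℕ} (hi : i < m) :
      (X ^ m * (f % p) / p).coeff (m - (i + 1)) = residue p (X ^ i * f) := by
    rw [coeff_X_pow_mul_div_eq_residue p _ hi, residue_mul_mod]
  constructor
  · intro hzero
    ext j
    rw [coeff_zero]
    rcases lt_or_ge j m with hj | hj
    · have hi : m - (j + 1) < m := by lia
      rw [show j = m - (m - (j + 1) + 1) by lia, hres hi, hzero _ hi]
    · exact coeff_eq_zero_of_degree_lt <|
        (degree_X_pow_mul_div_lt (degree_mod_lt f hp) m).trans_le (by exact_mod_cast hj)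
  · intro hquot i hi
    rw [← hres hi, hquot, coeff_zero]

-- If `n < m`, then `n - m` truncates to `0` and both sides say `f = 0`.
theorem degree_X_pow_mul_lt_iff (f : K[X]) (m n : ℕ) :
    (X ^ m * f).degree < (n : WithBot ℕ) ↔ f.degree < ((n - m : ℕ) : WithBot ℕ) := by
  rcases eq_or_ne f 0 with rfl | hf
  · simp
  · rw [degree_mul, degree_X_pow, degree_eq_natDegree hf]
    norm_cast
    lia

theorem exists_degree_lt_and_dvd_sub_iff {p : K[X]} (hp : p ≠ 0) (f : K[X]) {d : WithBot ℕ}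
    (hd : d ≤ p.degree) : (∃ a : K[X], a.degree < d ∧ p ∣ f - a) ↔ (f % p).degree < d := by
  constructor
  · rintro ⟨a, ha, hdvd⟩
    rwa [mod_eq_of_dvd_sub hdvd, (mod_eq_self_iff hp).2 (ha.trans_le hd)]
  · intro hmod
    exact ⟨f % p, hmod, f / p, by rw [sub_eq_iff_eq_add, EuclideanDomain.div_add_mod]⟩

end Residue

section Digits

open Polynomial

theorem digit_eq_zero_of_lt_pow {b k i : ℕ} (h : k < b ^ i) : digit b k i = 0 := by
  rw [digit, Nat.div_eq_of_lt h, Nat.zero_mod]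

theorem digit_eq_zero_of_lt {b k i : ℕ} (h : k < i) : digit b k i = 0 := by
  match b with
  | 0 => rw [digit, zero_pow (Nat.ne_zero_of_lt h), Nat.div_zero, Nat.zero_mod]
  | 1 => exact Nat.mod_one _
  | b + 2 => exact digit_eq_zero_of_lt_pow (h.trans (Nat.lt_pow_self (by lia)))

theorem sum_range_eq_sum_range_of_eq_zero {M : Type*} [AddCommMonoid M] {f : ℕ → M} {N N' : ℕ}
    (h : ∀ i ≥ N, f i = 0) (h' : ∀ i ≥ N', f i = 0) :
    ∑ i ∈ Finset.range N, f i = ∑ i ∈ Finset.range N', f i :=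
  (Finset.eventually_constant_sum h (le_max_left N N')).symm.trans
    (Finset.eventually_constant_sum h' (le_max_right N N'))

theorem natPoly_eq_trunc {b h m : ℕ} [NeZero b] (hh : h < b ^ m) :
    natPoly b h = trunc b m h := by
  refine sum_range_eq_sum_range_of_eq_zero (fun i hi => ?_) (fun i hi => ?_)
  · rw [digit_eq_zero_of_lt hi, Nat.cast_zero, C_0, zero_mul]
  · rw [digit_eq_zero_of_lt_pow (hh.trans_le (Nat.pow_le_pow_right (NeZero.pos b) hi)),
      Nat.cast_zero, C_0, zero_mul]

theorem map_trunc_mul {b : ℕ} {M : Type*} [AddCommMonoid M] [Module (ZMod b) M]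
    (L : (ZMod b)[X] →ₗ[ZMod b] M) (n k : ℕ) (f : (ZMod b)[X]) :
    L (trunc b n k * f) = ∑ i ∈ Finset.range n, (digit b k i : ZMod b) • L (X ^ i * f) := by
  simp only [trunc, Finset.sum_mul, map_sum, ← smul_eq_C_mul, smul_mul_assoc, map_smul]

theorem sum_range_pow_digits {M : Type*} [AddCommMonoid M] (b m : ℕ) [NeZero b]
    (f : (Fin m → ZMod b) → M) :
    ∑ h ∈ Finset.range (b ^ m), f (fun i => (digit b h i : ZMod b)) = ∑ c, f c := by
  obtain ⟨b, rfl⟩ := Nat.exists_eq_succ_of_ne_zero (NeZero.ne b)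
  rw [Finset.sum_range]
  -- `ZMod (b + 1)` unfolds to `Fin (b + 1)`.
  exact Fintype.sum_equiv finFunctionFinEquiv.symm _ _ fun h =>
    congrArg f (funext fun i => Fin.cast_val_eq_self (finFunctionFinEquiv.symm h i))

end Digits

section Characters

open Polynomial

theorem addChar_map_sum {A M ι : Type*} [AddCommMonoid A] [CommMonoid M] (ψ : AddChar A M)
    (t : Finset ι) (f : ι → A) : ψ (∑ i ∈ t, f i) = ∏ i ∈ t, ψ (f i) :=
  map_sum ψ.toAddMonoidHom f t

theorem sum_addChar_dotProduct {R R' ι : Type*} [CommRing R] [Fintype R] [CommRing R']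
    [IsDomain R'] [Fintype ι] [DecidableEq ι] {ψ : AddChar R R'} (hψ : ψ.IsPrimitive) (w : ι → R) :
    ∑ c : ι → R, ψ (c ⬝ᵥ w) = if w = 0 then (Fintype.card R : R') ^ Fintype.card ι else 0 := by
  calc ∑ c : ι → R, ψ (c ⬝ᵥ w)
      = ∑ c : ι → R, ∏ i, ψ (c i * w i) :=
        Finset.sum_congr rfl fun c _ => addChar_map_sum ψ _ _
    _ = ∏ i, ∑ d : R, ψ (d * w i) := (Fintype.prod_sum fun i d => ψ (d * w i)).symm
    _ = ∏ i, if w i = 0 then (Fintype.card R : R') else 0 := by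
        simp only [AddChar.sum_mulShift _ hψ, Nat.cast_ite, Nat.cast_zero]
    _ = if w = 0 then (Fintype.card R : R') ^ Fintype.card ι else 0 := by
        simp [Finset.prod_ite_zero, funext_iff]

theorem W_eq_stdAddChar (b k : ℕ) [NeZero b] (z : ℕ → ZMod b) :
    W b k z = ZMod.stdAddChar (∑ i ∈ Finset.range (k + 1), (digit b k i : ZMod b) * z i) := by
  have hcast : ∑ i ∈ Finset.range (k + 1), (digit b k i : ZMod b) * z i =
      ((∑ i ∈ Finset.range (k + 1), digit b k i * (z i).val : ℕ) : ℤ) := by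
    simp
  rw [hcast, ZMod.stdAddChar_coe, W, ← Complex.exp_nat_mul]
  push_cast
  ring_nf

theorem sum_stdAddChar_natPoly_mul {b : ℕ} [NeZero b] (L : (ZMod b)[X] →ₗ[ZMod b] ZMod b)
    (f : (ZMod b)[X]) (m : ℕ) :
    ∑ h ∈ Finset.range (b ^ m), ZMod.stdAddChar (L (natPoly b h * f)) =
      if ∀ i < m, L (X ^ i * f) = 0 then (b : ℂ) ^ m else 0 := by
  let w : Fin m → ZMod b := fun i => L (X ^ (i : ℕ) * f)
  have hw : w = 0 ↔ ∀ i < m, L (X ^ i * f) = 0 := by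
    rw [funext_iff, Fin.forall_iff]
    rfl
  have hdigits : ∀ h ∈ Finset.range (b ^ m),
      L (natPoly b h * f) = (fun i : Fin m => (digit b h i : ZMod b)) ⬝ᵥ w := by
    intro h hh
    rw [natPoly_eq_trunc (Finset.mem_range.1 hh), map_trunc_mul, Finset.sum_range]
    rfl
  rw [Finset.sum_congr rfl fun h hh => congrArg ZMod.stdAddChar (hdigits h hh),
    sum_range_pow_digits b m fun c => ZMod.stdAddChar (c ⬝ᵥ w),
    sum_addChar_dotProduct (ZMod.isPrimitive_stdAddChar b), ZMod.card, Fintype.card_fin]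
  simp only [hw]

end Characters

section Lattice

open Polynomial

variable {b : ℕ} [Fact b.Prime]

theorem hoPoint_of_lt (p q : (ZMod b)[X]) {n i : ℕ} (h : ℕ) (hi : i < n) :
    hoPoint b p q n h i = residue p (X ^ i * (natPoly b h * q)) := by
  rw [hoPoint, if_pos hi, mul_assoc, coeff_X_pow_mul_div_eq_residue p _ hi]

theorem W_hoPoint (p q : (ZMod b)[X]) (n h k : ℕ) :
    W b k (hoPoint b p q n h) =
      ZMod.stdAddChar (residue p (natPoly b h * (trunc b n k * q))) := by
  rw [W_eq_stdAddChar, mul_left_comm, map_trunc_mul,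
    sum_range_eq_sum_range_of_eq_zero (N' := n)
      (fun i hi => by rw [digit_eq_zero_of_lt hi, Nat.cast_zero, zero_mul])
      (fun i hi => by rw [hoPoint, if_neg hi.not_gt, mul_zero])]
  congr 1
  exact Finset.sum_congr rfl fun i hi => by
    rw [hoPoint_of_lt p q h (Finset.mem_range.1 hi), smul_eq_mul]

theorem Wvec_hoPoint {s : ℕ} (p : (ZMod b)[X]) (q : Fin s → (ZMod b)[X]) (k : Fin s → ℕ)
    (n h : ℕ) :
    Wvec b k (fun j => hoPoint b p (q j) n h) =
      ZMod.stdAddChar (residue p (natPoly b h * ∑ j, trunc b n (k j) * q j)) := by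
  simp only [Wvec, W_hoPoint, Finset.mul_sum, map_sum, addChar_map_sum]

theorem inDualLattice_iff_forall_residue {s m n : ℕ} {p : (ZMod b)[X]}
    (hp : p.degree = (n : WithBot ℕ)) (q : Fin s → (ZMod b)[X]) (k : Fin s → ℕ) :
    inDualLattice b m n p q k ↔
      ∀ i < m, residue p (X ^ i * ∑ j, trunc b n (k j) * q j) = 0 := by
  have hp0 : p ≠ 0 := ne_zero_of_coe_le_degree hp.ge
  have hd : ((n - m : ℕ) : WithBot ℕ) ≤ p.degree := by
    rw [hp]
    exact_mod_cast Nat.sub_le n m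
  rw [inDualLattice, exists_degree_lt_and_dvd_sub_iff hp0 _ hd,
    forall_residue_X_pow_mul_eq_zero_iff hp0, hp, degree_X_pow_mul_lt_iff]

end Lattice

theorem sum_char_hoplps_general (b s m n : ℕ) [Fact b.Prime] (p : Polynomial (ZMod b))
    (hp : p.degree = (n : WithBot ℕ)) (q : Fin s → Polynomial (ZMod b)) (k : Fin s → ℕ) :
    ∑ h ∈ Finset.range (b ^ m), Wvec b k (fun j => hoPoint b p (q j) n h) =
      if inDualLattice b m n p q k then ((b : ℂ) ^ m) else 0 := by
  simp only [Wvec_hoPoint, sum_stdAddChar_natPoly_mul, inDualLattice_iff_forall_residue hp]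

/-- The character sum over a higher order polynomial lattice point set is `b^m` on the
dual polynomial lattice and `0` off it. -/
theorem sum_char_hoplps (b s m n : ℕ) [Fact b.Prime] (hs : 0 < s) (hm : 0 < m)
    (hmn : m ≤ n) (p : Polynomial (ZMod b)) (hp : p.degree = (n : WithBot ℕ))
    (q : Fin s → Polynomial (ZMod b)) (k : Fin s → ℕ) :
    ∑ h ∈ Finset.range (b ^ m), Wvec b k (fun j => hoPoint b p (q j) n h) =
      if inDualLattice b m n p q k then ((b : ℂ) ^ m) else 0 :=
  sum_char_hoplps_general b s m n p hp q k

end QMC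
end

section
/- Let T = (t_{i,j})_{i,j∈ℕ} be the matrix over ℤ/bℤ with t_{i,1} = b−1, t_{i,i+1} = 1, and t_{i,j} = 0 otherwise. Then for every matrix C over ℤ/bℤ with countably many rows and m columns and every v ∈ (ℤ/bℤ)^m, one has Φ_b(C v) = (T C) v. Consequently, if 𝒫 is the digital net in G^s with generating matrices C_1,…,C_s, then its folded digital net 𝒫_{Φ_b} coincides with the digital net in G^s with generating matrices T C_1,…,T C_s. -/
namespace QMC

/-- the `b`-adic tent transformation `Φ_b : G → G`, `(Φ_b z) i = ζ_{i+2} - ζ_1`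
(here `z i = ζ_{i+1}`). -/
def tent (b : ℕ) (z : ℕ → ZMod b) : ℕ → ZMod b := fun i => z (i + 1) - z 0

/-- the matrix `T` with `t_{i,1} = b-1`, `t_{i,i+1} = 1` and `t_{i,j} = 0` otherwise
(rows and columns indexed by `ℕ` starting from `0`). -/
def Tmat (b : ℕ) (i j : ℕ) : ZMod b :=
  if j = 0 then ((b - 1 : ℕ) : ZMod b) else if j = i + 1 then 1 else 0

/-- the matrix product `T · C` for a matrix `C` with countably many rows and `m`
columns (the sum over `j` has finite support). -/
noncomputable def TmulC (b : ℕ) {m : ℕ} (C : ℕ → Fin m → ZMod b) : ℕ → Fin m → ZMod b :=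
  fun i c => ∑ᶠ j : ℕ, Tmat b i j * C j c

/-- the point `z_h = (C₁ h⃗, …, C_s h⃗)` of the digital net with generating matrices `C`. -/
def netPoint (b : ℕ) {s m : ℕ} (C : Fin s → ℕ → Fin m → ZMod b) (h : ℕ) :
    Fin s → ℕ → ZMod b :=
  fun j i => ∑ c, C j i c * (digit b h c : ZMod b)

section

variable {b : ℕ}

theorem Tmat_eq_single_sub_single (hb : 0 < b) (i : ℕ) :
    Tmat b i = Pi.single (i + 1) 1 - Pi.single 0 1 := by
  funext j
  rcases eq_or_ne j 0 with rfl | hj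
  · simp [Tmat, Nat.cast_pred hb]
  · simp [Tmat, hj, Pi.single_apply]

theorem finsum_Tmat_mul (hb : 0 < b) (z : ℕ → ZMod b) (i : ℕ) :
    ∑ᶠ j, Tmat b i j * z j = tent b z i := by
  have support_subset : (fun j => Tmat b i j * z j).support ⊆ ({i + 1, 0} : Finset ℕ) := by
    intro j hj
    contrapose! hj
    simp_all [Tmat]
  rw [finsum_eq_sum_of_support_subset _ support_subset, Finset.sum_pair i.succ_ne_zero]
  simp [Tmat_eq_single_sub_single hb, tent, sub_eq_add_neg]

theorem TmulC_apply (hb : 0 < b) {m : ℕ} (C : ℕ → Fin m → ZMod b) (i : ℕ) (c : Fin m) :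
    TmulC b C i c = tent b (fun j => C j c) i :=
  finsum_Tmat_mul hb (fun j => C j c) i

theorem tent_sum_mul {ι : Type*} (t : Finset ι) (C : ℕ → ι → ZMod b) (v : ι → ZMod b) :
    tent b (fun i => ∑ c ∈ t, C i c * v c) =
      fun i => ∑ c ∈ t, tent b (fun j => C j c) i * v c := by
  funext i
  simp only [tent, sub_mul, Finset.sum_sub_distrib]

theorem tent_mulVec (hb : 0 < b) {m : ℕ} (C : ℕ → Fin m → ZMod b) (v : Fin m → ZMod b) :
    tent b (fun i => ∑ c, C i c * v c) = fun i => ∑ c, TmulC b C i c * v c := by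
  simp only [tent_sum_mul, TmulC_apply hb]

theorem tent_netPoint (hb : 0 < b) {s m : ℕ} (C : Fin s → ℕ → Fin m → ZMod b) (h : ℕ) :
    (fun j => tent b (netPoint b C h j)) = netPoint b (fun j => TmulC b (C j)) h :=
  funext fun j => tent_mulVec hb (C j) fun c => digit b h c

end

/-- Folding by the tent transformation is given by multiplication by the matrix `T`:
`Φ_b(C v) = (T C) v`, and consequently the folded digital net coincides with the
digital net generated by the matrices `T C₁, …, T C_s`. -/
theorem tent_eq_Tmat_mulVec (b : ℕ) (hb : 2 ≤ b) (s m : ℕ) (hs : 0 < s) (hm : 0 < m) :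
    (∀ (C : ℕ → Fin m → ZMod b) (v : Fin m → ZMod b),
      tent b (fun i => ∑ c, C i c * v c) = fun i => ∑ c, TmulC b C i c * v c) ∧
    ∀ C : Fin s → ℕ → Fin m → ZMod b,
      (fun z : Fin s → ℕ → ZMod b => fun j => tent b (z j)) ''
          {z | ∃ h < b ^ m, z = netPoint b C h} =
        {z | ∃ h < b ^ m, z = netPoint b (fun j => TmulC b (C j)) h} := by
  have b_pos : 0 < b := by lia
  refine ⟨tent_mulVec b_pos, fun C => Set.ext fun z => ⟨?_, ?_⟩⟩
  · rintro ⟨_, ⟨h, h_lt, rfl⟩, rfl⟩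
    exact ⟨h, h_lt, tent_netPoint b_pos C h⟩
  · rintro ⟨h, h_lt, rfl⟩
    exact ⟨netPoint b C h, ⟨h, h_lt, rfl⟩, tent_netPoint b_pos C h⟩

end QMC
end

section
/- Let b be prime, α ≥ 2 an integer, m ≤ n positive integers, p ∈ 𝔽_b[x] irreducible with deg(p) = n, γ_1,…,γ_s ≥ 0 weights and D > 0 a constant. Suppose q_1,…,q_s ∈ R_{b,n} are chosen component-by-component: for each τ = 1,…,s, q_τ minimizes the map q̃ ↦ B_α((q_1,…,q_{τ−1}, q̃), p) over q̃ ∈ R_{b,n}. Then for every 1 ≤ τ ≤ s and every real λ with 1/α < λ ≤ 1, B_α((q_1,…,q_τ), p) ≤ b^{−min(m/λ, 2n)} [ −1 + ∏_{j=1}^{τ} (1 + γ_j^{λ/2} D^{λ/2} A_{α,b,λ}) ]^{1/λ}, where A_{α,b,λ} = A₁ + A₂ with A₁ = (b/(b−1)) [ Σ_{v=1}^{α−1} ∏_{i=1}^{v} (b−1)/(b^{λi}−1) + ((b^{λα}−1)/(b^{λα}−b)) ∏_{i=1}^{α} (b−1)/(b^{λi}−1) ] and A₂ = (1/(b−1))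 Σ_{v=2}^{α−1} ∏_{i=1}^{v} (b^{λ}(b−1))/(b^{λi}−1) + (b^{λ}/(b^{λα}−b)) ∏_{i=1}^{α−1} (b^{λ}(b−1))/(b^{λi}−1). -/
namespace QMC

/-- `μ_α(k) = a₁ + ⋯ + a_{min(v,α)}`, the sum of the `α` largest positions (counted
from `1`) of nonzero `b`-adic digits of `k`; `μ_α(0) = 0`. -/
def mualpha (b α k : ℕ) : ℕ :=
  (((((Finset.range (k + 1)).filter fun i => digit b k i ≠ 0).sort (· ≤ ·)).reverse.take
    α).map (· + 1)).sum

/-- the set `E` of positive integers whose `b`-adic digit sum is divisible by `b`. -/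
def Eset (b : ℕ) : Set ℕ := {k | k ≠ 0 ∧ (b : ℕ) ∣ (Nat.digits b k).sum}

/-- the quality criterion `B_α((q_1,…,q_τ), p)` (a bound on the squared worst-case
error of the folded higher order polynomial lattice rule). -/
noncomputable def Bcrit (b α m n : ℕ) [Fact b.Prime] (γ : ℕ → ℝ) (D : ℝ)
    (p : Polynomial (ZMod b)) (τ : ℕ) (q : ℕ → Polynomial (ZMod b)) : ℝ :=
  ∑ u ∈ (Finset.range τ).powerset.filter (fun u => u.Nonempty),
    Real.sqrt (∏ j ∈ u, γ j) * Real.sqrt D ^ u.card *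
      ∑' f : {f : ℕ → ℕ // (∀ j ∈ u, f j ∈ Eset b) ∧ (∀ j ∉ u, f j = 0) ∧
          ((∑ j ∈ Finset.range τ, trunc b n (f j) * q j) % p).degree <
            ((n - m : ℕ) : WithBot ℕ)},
        ((b : ℝ) ^ ∑ j ∈ u, mualpha b α (f.1 j / b))⁻¹

/-- the constant `A_{α,b,λ,1}`. -/
noncomputable def A1 (b α : ℕ) (lam : ℝ) : ℝ :=
  ((b : ℝ) / ((b : ℝ) - 1)) *
    (∑ v ∈ Finset.Icc 1 (α - 1), ∏ i ∈ Finset.Icc 1 v,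
        ((b : ℝ) - 1) / ((b : ℝ) ^ (lam * i) - 1) +
      (((b : ℝ) ^ (lam * α) - 1) / ((b : ℝ) ^ (lam * α) - b)) *
        ∏ i ∈ Finset.Icc 1 α, ((b : ℝ) - 1) / ((b : ℝ) ^ (lam * i) - 1))

/-- the constant `A_{α,b,λ,2}`. -/
noncomputable def A2 (b α : ℕ) (lam : ℝ) : ℝ :=
  (1 / ((b : ℝ) - 1)) * ∑ v ∈ Finset.Icc 2 (α - 1), ∏ i ∈ Finset.Icc 1 v,
      ((b : ℝ) ^ lam * ((b : ℝ) - 1)) / ((b : ℝ) ^ (lam * i) - 1) +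
    ((b : ℝ) ^ lam / ((b : ℝ) ^ (lam * α) - b)) *
      ∏ i ∈ Finset.Icc 1 (α - 1), ((b : ℝ) ^ lam * ((b : ℝ) - 1)) / ((b : ℝ) ^ (lam * i) - 1)

/-!
Write `μ(k) = μ_α(⌊k / b⌋)` and `K = b ^ (-λ min(m / λ, 2n))`. Since `x ↦ x ^ λ` is subadditive for
`λ ≤ 1`, the `λ`-th power of the part of the criterion that involves `q_τ` is at most the same sum
with every term raised to the power `λ`, and by minimality it is at most the average of that sum
over all `q̃` with `deg q̃ < n`. As `p` is irreducible, a vector whose last component `k` satisfies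
`tr_n(k) ≠ 0` lies in the dual lattice for at most `b ^ (n - m)` of the `b ^ n` choices of `q̃`.
If `tr_n(k) = 0`, it may do so for all of them, but then `k ∈ E` is a multiple of `b ^ n` with at
least two nonzero digits, so `μ(k)` is at least `2n`. Together with `∑_{k ∈ E} b ^ (-λ μ(k)) ≤ A₁`
and `∑_{k ∈ E, tr_n(k) = 0} b ^ (-λ μ(k)) ≤ b ^ (-2λn) A₂` this gives the factor `K (A₁ + A₂)` for
the new component, and induction on `τ` yields the product. For these two sums, group the integers
by the number of positions that enter `μ_α` and split off the last digit: each group obeys a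
recursion solved by a product of geometric series, and the digit-sum congruence leaves at most one
choice for the digit split off.
-/

open scoped ENNReal Polynomial

section ENNRealSums

variable {ι κ : Type*}

lemma sum_rpow_le_sum_rpow (s : Finset ι) (f : ι → ℝ≥0∞) {lam : ℝ} (h0 : 0 < lam) (h1 : lam ≤ 1) :
    (∑ i ∈ s, f i) ^ lam ≤ ∑ i ∈ s, f i ^ lam :=
  Finset.le_sum_of_subadditive (· ^ lam) (ENNReal.zero_rpow_of_pos h0).le
    (fun x y => ENNReal.rpow_add_le_add_rpow x y h0.le h1) s f

lemma tsum_rpow_le_tsum_rpow (f : ι → ℝ≥0∞) {lam : ℝ} (h0 : 0 < lam) (h1 : lam ≤ 1) :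
    (∑' i, f i) ^ lam ≤ ∑' i, f i ^ lam := by
  rw [← ENNReal.le_rpow_inv_iff h0, ENNReal.tsum_eq_iSup_sum]
  refine iSup_le fun s => ?_
  rw [ENNReal.le_rpow_inv_iff h0]
  exact (sum_rpow_le_sum_rpow s f h0 h1).trans (ENNReal.sum_le_tsum s)

lemma tsum_tsum_subtype_le_of_encard_le {R : ι → Set κ} {T : Set κ} (hR : ∀ i, R i ⊆ T)
    {N : κ → ℝ≥0∞} (hN : ∀ x ∈ T, (({i | x ∈ R i}.encard : ℕ∞) : ℝ≥0∞) ≤ N x) (h : κ → ℝ≥0∞) :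
    ∑' i, ∑' x : R i, h x ≤ ∑' x : T, N x * h x := by
  have hindicator : ∀ i, ∑' x : R i, h x =
      ∑' x : T, {i | x.1 ∈ R i}.indicator (fun _ => h x) i := by
    intro i
    rw [tsum_subtype (R i) h, ← tsum_subtype_eq_of_support_subset
      (Set.support_indicator_subset.trans (hR i))]
    rfl
  simp only [hindicator]
  rw [ENNReal.tsum_comm]
  refine ENNReal.tsum_le_tsum fun x => ?_
  rw [← tsum_subtype, ENNReal.tsum_set_const]
  gcongr
  exact hN x x.2

/-- The families with values in `S` on `u`, extended by zero outside of `u`. -/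
def zeroExtendedFamilies [Zero κ] (S : Set κ) (u : Finset ι) : Set (ι → κ) :=
  {f | (∀ j ∈ u, f j ∈ S) ∧ ∀ j ∉ u, f j = 0}

variable [Zero κ]

lemma zeroExtendedFamilies_empty (S : Set κ) :
    zeroExtendedFamilies S (∅ : Finset ι) = {0} := by
  ext f
  simp [zeroExtendedFamilies, funext_iff]

lemma update_zero_mem_zeroExtendedFamilies [DecidableEq ι] {S : Set κ} {u : Finset ι} {a : ι}
    (ha : a ∉ u) {f : ι → κ} (hf : f ∈ zeroExtendedFamilies S (insert a u)) :
    Function.update f a 0 ∈ zeroExtendedFamilies S u := by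
  refine ⟨fun j hj => ?_, fun j hj => ?_⟩
  · rw [Function.update_of_ne (ne_of_mem_of_not_mem hj ha)]
    exact hf.1 j (Finset.mem_insert_of_mem hj)
  · rcases eq_or_ne j a with rfl | hja
    · exact Function.update_self ..
    · rw [Function.update_of_ne hja]
      exact hf.2 j (by simp [hja, hj])

lemma tsum_prod_le_prod_tsum (S : Set κ) (u : Finset ι) (g : ι → κ → ℝ≥0∞) :
    ∑' f : zeroExtendedFamilies S u, ∏ j ∈ u, g j (f.1 j) ≤ ∏ j ∈ u, ∑' k : S, g j k := by
  classical
  induction u using Finset.induction_on with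
  | empty =>
    rw [zeroExtendedFamilies_empty]
    simp
  | insert a u ha ih =>
    let split (f : zeroExtendedFamilies S (insert a u)) : S × zeroExtendedFamilies S u :=
      (⟨f.1 a, f.2.1 a (Finset.mem_insert_self a u)⟩,
        ⟨_, update_zero_mem_zeroExtendedFamilies ha f.2⟩)
    have split_injective : Function.Injective split := by
      intro f f' h
      simp only [split, Prod.mk.injEq, Subtype.mk.injEq] at h
      refine Subtype.ext ?_
      rw [← Function.update_eq_self a f.1, ← Function.update_idem 0, h.2, h.1,
        Function.update_idem, Function.update_eq_self]
    have prod_split : ∀ f : zeroExtendedFamilies S (insert a u),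
        ∏ j ∈ insert a u, g j (f.1 j) = g a (split f).1 * ∏ j ∈ u, g j ((split f).2.1 j) := by
      intro f
      rw [Finset.prod_insert ha]
      congr 1
      refine Finset.prod_congr rfl fun j hj => ?_
      simp only [split, Function.update_of_ne (ne_of_mem_of_not_mem hj ha)]
    rw [tsum_congr prod_split, Finset.prod_insert ha]
    refine (ENNReal.tsum_comp_le_tsum_of_injective split_injective
      fun x => g a x.1 * ∏ j ∈ u, g j (x.2.1 j)).trans ?_
    rw [ENNReal.tsum_prod', ← ENNReal.tsum_mul_right]
    refine ENNReal.tsum_le_tsum fun k => ?_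
    simp only [ENNReal.tsum_mul_left]
    gcongr

end ENNRealSums

section Digits

variable {b : ℕ}

/-- The positions, counted from `0`, of the nonzero `b`-adic digits of `k`. -/
def digitSupport (b k : ℕ) : Finset ℕ :=
  (Finset.range (k + 1)).filter fun i => digit b k i ≠ 0

/-- The number of nonzero `b`-adic digits of `k`. -/
def hammingWeight (b k : ℕ) : ℕ := (digitSupport b k).card

lemma digit_zero_right (b k : ℕ) : digit b k 0 = k % b := by simp [digit]

lemma digit_succ (b k i : ℕ) : digit b k (i + 1) = digit b (k / b) i := by
  simp [digit, pow_succ', Nat.div_div_eq_div_mul]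

lemma mem_digitSupport (hb : 1 < b) {k i : ℕ} : i ∈ digitSupport b k ↔ digit b k i ≠ 0 := by
  simp only [digitSupport, Finset.mem_filter, Finset.mem_range, and_iff_right_iff_imp]
  contrapose!
  intro hki
  have : k < b ^ i := (Nat.lt_of_succ_le hki).trans (Nat.lt_pow_self hb)
  simp [digit, Nat.div_eq_of_lt this]

lemma digitSupport_eq_ite (hb : 1 < b) (k : ℕ) :
    digitSupport b k =
      if k % b = 0 then (digitSupport b (k / b)).map (addRightEmbedding 1)
      else insert 0 ((digitSupport b (k / b)).map (addRightEmbedding 1)) := by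
  ext (_ | i)
  · rw [mem_digitSupport hb, digit_zero_right]
    split_ifs <;> simp_all
  · rw [mem_digitSupport hb, digit_succ, ← mem_digitSupport hb]
    split_ifs <;> simp

lemma sort_digitSupport (hb : 1 < b) (k : ℕ) :
    (digitSupport b k).sort (· ≤ ·) = (if k % b = 0 then [] else [0]) ++
      ((digitSupport b (k / b)).sort (· ≤ ·)).map (· + 1) := by
  have sort_map : ((digitSupport b (k / b)).map (addRightEmbedding 1)).sort (· ≤ ·) =
      ((digitSupport b (k / b)).sort (· ≤ ·)).map (· + 1) :=
    (Finset.map_sort (addRightEmbedding 1) _ _ _ (by simp)).symm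
  rw [digitSupport_eq_ite hb]
  split_ifs
  · rw [sort_map, List.nil_append]
  · rw [Finset.sort_insert _ (by simp) (by simp), sort_map, List.singleton_append]

lemma hammingWeight_eq (hb : 1 < b) (k : ℕ) :
    hammingWeight b k = hammingWeight b (k / b) + if k % b = 0 then 0 else 1 := by
  rw [hammingWeight, hammingWeight, digitSupport_eq_ite hb]
  split_ifs <;> simp

-- Shifting all digits down by one lowers each of the `min (hammingWeight b k) α` positions
-- that enter `μ_α` by one.
lemma mualpha_eq (hb : 1 < b) (α k : ℕ) :
    mualpha b α k = mualpha b α (k / b) + min (hammingWeight b k) α := by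
  have length_sort : ((digitSupport b (k / b)).sort (· ≤ ·)).reverse.length =
      hammingWeight b (k / b) := by simp [hammingWeight]
  change ((((digitSupport b k).sort (· ≤ ·)).reverse.take α).map (· + 1)).sum =
    ((((digitSupport b (k / b)).sort (· ≤ ·)).reverse.take α).map (· + 1)).sum + _
  rw [hammingWeight_eq hb, sort_digitSupport hb, List.reverse_append, ← List.map_reverse,
    List.take_append, ← List.map_take, List.map_append, List.sum_append, List.map_map,
    List.length_map, length_sort]
  generalize ((digitSupport b (k / b)).sort (· ≤ ·)).reverse = l at *
  have sum_shift : ((l.take α).map ((· + 1) ∘ (· + 1))).sum =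
      ((l.take α).map (· + 1)).sum + min α l.length := by
    simp only [Function.comp_def, List.sum_map_add, List.map_const', List.sum_replicate,
      List.length_take, smul_eq_mul, mul_one]
  rw [sum_shift, length_sort]
  split_ifs
  · simp [min_comm]
  · rcases Nat.lt_or_ge (hammingWeight b (k / b)) α with hlt | hge
    · obtain ⟨d, hd⟩ := Nat.exists_eq_add_of_lt hlt
      simp [hd, add_assoc]
    · simp [Nat.sub_eq_zero_of_le hge, hge, Nat.le_succ_of_le hge]

lemma digits_sum_eq (hb : 1 < b) (k : ℕ) :
    (Nat.digits b k).sum = k % b + (Nat.digits b (k / b)).sum := by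
  rcases Nat.eq_zero_or_pos k with rfl | hk
  · simp
  · rw [Nat.digits_def' hb hk, List.sum_cons]

lemma hammingWeight_zero (b : ℕ) : hammingWeight b 0 = 0 := by
  simp [hammingWeight, digitSupport, digit]

lemma mualpha_zero (b α : ℕ) : mualpha b α 0 = 0 := by simp [mualpha, digit]

lemma hammingWeight_pos (hb : 1 < b) {k : ℕ} (hk : k ≠ 0) : 0 < hammingWeight b k := by
  induction k using Nat.strong_induction_on with
  | _ k ih =>
    rw [hammingWeight_eq hb]
    split_ifs with hmod
    · have hdiv : k / b ≠ 0 := fun h => hk (by simpa [h, hmod] using (Nat.div_add_mod k b).symm)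
      simpa using ih (k / b) (Nat.div_lt_self (Nat.pos_of_ne_zero hk) hb) hdiv
    · exact Nat.succ_pos _

lemma eq_of_dvd_add_of_lt {c d s : ℕ} (hc : c < b) (hd : d < b) (hcs : b ∣ c + s)
    (hds : b ∣ d + s) : c = d := by
  have hcd : c + s ≡ d + s [MOD b] :=
    ((Nat.modEq_zero_iff_dvd).2 hcs).trans ((Nat.modEq_zero_iff_dvd).2 hds).symm
  exact (hcd.add_right_cancel' s).eq_of_lt_of_lt hc hd

lemma div_ne_zero_of_mem_Eset (hb : 1 < b) {k : ℕ} (hk : k ∈ Eset b) : k / b ≠ 0 := by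
  intro hdiv
  have hdvd := hk.2
  rw [digits_sum_eq hb, hdiv, Nat.digits_zero, List.sum_nil, add_zero] at hdvd
  have hmod := Nat.eq_zero_of_dvd_of_lt hdvd (Nat.mod_lt k (by omega))
  exact hk.1 (by simpa [hdiv, hmod] using (Nat.div_add_mod k b).symm)

lemma two_le_hammingWeight_of_mem_Eset (hb : 1 < b) {k : ℕ} (hk : k ∈ Eset b) :
    2 ≤ hammingWeight b k := by
  induction k using Nat.strong_induction_on with
  | _ k ih =>
    have hdiv := div_ne_zero_of_mem_Eset hb hk
    rw [hammingWeight_eq hb]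
    split_ifs with hmod
    · refine ih (k / b) (Nat.div_lt_self (Nat.pos_of_ne_zero hk.1) hb) ⟨hdiv, ?_⟩
      simpa [digits_sum_eq hb k, hmod] using hk.2
    · have := hammingWeight_pos hb hdiv
      omega

lemma injOn_div_Eset (hb : 1 < b) : Set.InjOn (· / b) (Eset b) := by
  intro k hk l hl hkl
  have hbpos : 0 < b := by omega
  have hk' := hk.2
  have hl' := hl.2
  rw [digits_sum_eq hb] at hk' hl'
  simp only at hkl
  rw [hkl] at hk'
  have hmod := eq_of_dvd_add_of_lt (Nat.mod_lt k hbpos) (Nat.mod_lt l hbpos) hk' hl'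
  rw [← Nat.div_add_mod k b, hkl, hmod, Nat.div_add_mod]

lemma hammingWeight_pow_mul (hb : 1 < b) (r l : ℕ) :
    hammingWeight b (b ^ r * l) = hammingWeight b l := by
  induction r with
  | zero => simp
  | succ r ih =>
    rw [hammingWeight_eq hb, pow_succ', mul_assoc, Nat.mul_div_cancel_left _ (by omega), ih]
    simp

lemma mualpha_pow_mul (hb : 1 < b) (α r l : ℕ) :
    mualpha b α (b ^ r * l) = mualpha b α l + r * min (hammingWeight b l) α := by
  induction r with
  | zero => simp
  | succ r ih =>
    rw [mualpha_eq hb, hammingWeight_pow_mul hb, pow_succ', mul_assoc,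
      Nat.mul_div_cancel_left _ (by omega), ih]
    ring

lemma mem_Eset_of_pow_mul_mem (hb : 1 < b) {r l : ℕ} (h : b ^ r * l ∈ Eset b) : l ∈ Eset b := by
  have hl : l ≠ 0 := right_ne_zero_of_mul h.1
  refine ⟨hl, ?_⟩
  simpa [Nat.digits_base_pow_mul hb (Nat.pos_of_ne_zero hl)] using h.2

end Digits

section LevelSums

variable {b α : ℕ} {z : ℝ}

/-- The restriction of `k ↦ z ^ μ_α(k)` to the level `min (hammingWeight b k) α = v`, i.e. to the
`k` for which exactly `v` digits contribute to `μ_α(k)`. -/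
noncomputable def levelTerm (b α : ℕ) (z : ℝ) (v k : ℕ) : ℝ :=
  if min (hammingWeight b k) α = v then z ^ mualpha b α k else 0

/-- The restriction of `levelTerm` to the `k` whose `b`-adic digit sum is divisible by `b`. -/
noncomputable def foldedLevelTerm (b α : ℕ) (z : ℝ) (v k : ℕ) : ℝ :=
  if b ∣ (Nat.digits b k).sum then levelTerm b α z v k else 0

/-- The number of digits `c < b` for which `k ↦ b * k + c` maps the level `v` to itself: only
`c = 0` for `v < α`, but every `c` on the top level `v = α`. -/
def levelMultiplicity (b α v : ℕ) : ℕ := if v = α then b else 1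

/-- The sum of `levelTerm b α z v` over all `k`, as a product of geometric series. -/
noncomputable def levelBound (b α : ℕ) (z : ℝ) (v : ℕ) : ℝ :=
  ∏ i ∈ Finset.Icc 1 v, ((b : ℝ) - 1) * z ^ i / (1 - levelMultiplicity b α i * z ^ i)

lemma levelTerm_nonneg (hz : 0 ≤ z) (v k : ℕ) : 0 ≤ levelTerm b α z v k := by
  unfold levelTerm; split_ifs <;> positivity

lemma foldedLevelTerm_nonneg (hz : 0 ≤ z) (v k : ℕ) : 0 ≤ foldedLevelTerm b α z v k := by
  unfold foldedLevelTerm; split_ifs <;> simp [levelTerm_nonneg hz]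

lemma levelMultiplicity_mul_pow_lt_one (hz0 : 0 ≤ z) (hz1 : z < 1) (hbz : (b : ℝ) * z ^ α < 1)
    {v : ℕ} (hv : v ≠ 0) : (levelMultiplicity b α v : ℝ) * z ^ v < 1 := by
  rw [levelMultiplicity]
  split_ifs with hvα
  · rwa [hvα]
  · simpa using pow_lt_one₀ hz0 hz1 hv

lemma levelBound_nonneg (hb : 1 < b) (hz0 : 0 ≤ z) (hz1 : z < 1) (hbz : (b : ℝ) * z ^ α < 1)
    (v : ℕ) : 0 ≤ levelBound b α z v := by
  have hb1 : (1 : ℝ) ≤ b := by exact_mod_cast hb.le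
  refine Finset.prod_nonneg fun i hi => div_nonneg
    (mul_nonneg (sub_nonneg.2 hb1) (pow_nonneg hz0 i)) (sub_nonneg.2 ?_)
  have hi0 : i ≠ 0 := by have := Finset.mem_Icc.1 hi; omega
  exact (levelMultiplicity_mul_pow_lt_one hz0 hz1 hbz hi0).le

lemma levelBound_succ_eq (hz0 : 0 ≤ z) (hz1 : z < 1) (hbz : (b : ℝ) * z ^ α < 1) (v : ℕ) :
    levelBound b α z (v + 1) = z ^ (v + 1) *
      (levelMultiplicity b α (v + 1) * levelBound b α z (v + 1) +
        ((b : ℝ) - 1) * levelBound b α z v) := by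
  have hden := sub_pos.2 (levelMultiplicity_mul_pow_lt_one hz0 hz1 hbz v.succ_ne_zero)
  have hmul : levelBound b α z (v + 1) * (1 - levelMultiplicity b α (v + 1) * z ^ (v + 1)) =
      levelBound b α z v * (((b : ℝ) - 1) * z ^ (v + 1)) := by
    rw [levelBound, Finset.prod_Icc_succ_top (by omega), mul_assoc, div_mul_cancel₀ _ hden.ne',
      levelBound]
  linarith

lemma levelTerm_mul_add (hb : 1 < b) {v c : ℕ} (hv : v < α) (hc : c < b) (k : ℕ) :
    levelTerm b α z (v + 1) (b * k + c) = z ^ (v + 1) *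
      if c = 0 then levelTerm b α z (v + 1) k
      else levelTerm b α z v k + if v + 1 = α then levelTerm b α z (v + 1) k else 0 := by
  have hdiv : (b * k + c) / b = k := by
    rw [Nat.mul_add_div (by omega), Nat.div_eq_of_lt hc, add_zero]
  have hweight : hammingWeight b (b * k + c) = hammingWeight b k + if c = 0 then 0 else 1 := by
    rw [hammingWeight_eq hb, hdiv, Nat.mul_add_mod, Nat.mod_eq_of_lt hc]
  simp only [levelTerm, mualpha_eq hb α (b * k + c), hdiv]
  by_cases hlevel : min (hammingWeight b (b * k + c)) α = v + 1
  · rw [if_pos hlevel, hlevel, pow_add, mul_comm]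
    rw [hweight] at hlevel
    congr 1
    split_ifs at hlevel ⊢ <;> first | omega | simp
  · rw [if_neg hlevel]
    rw [hweight] at hlevel
    split_ifs at hlevel ⊢ <;> first | omega | simp

lemma sum_range_mul_eq {M : Type*} [AddCommMonoid M] (f : ℕ → M) (a N : ℕ) :
    ∑ i ∈ Finset.range (a * N), f i =
      ∑ k ∈ Finset.range N, ∑ c ∈ Finset.range a, f (a * k + c) := by
  induction N with
  | zero => simp
  | succ N ih => rw [Nat.mul_succ, Finset.sum_range_add, ih, Finset.sum_range_succ]

lemma sum_levelTerm_mul_add (hb : 1 < b) {v : ℕ} (hv : v < α) (k : ℕ) :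
    ∑ c ∈ Finset.range b, levelTerm b α z (v + 1) (b * k + c) = z ^ (v + 1) *
      (levelMultiplicity b α (v + 1) * levelTerm b α z (v + 1) k +
        ((b : ℝ) - 1) * levelTerm b α z v k) := by
  rw [Finset.sum_congr rfl fun c hc => levelTerm_mul_add hb hv (Finset.mem_range.1 hc) k,
    ← Finset.mul_sum]
  obtain ⟨d, rfl⟩ := Nat.exists_eq_add_of_lt (Nat.zero_lt_of_lt hb)
  rw [zero_add, Finset.sum_range_succ']
  simp only [Nat.add_eq_zero_iff, one_ne_zero, and_false, if_false, if_true, Finset.sum_const,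
    Finset.card_range, nsmul_eq_mul, levelMultiplicity]
  push_cast
  split_ifs <;> ring

lemma sum_levelTerm_le (hb : 1 < b) (hz0 : 0 ≤ z) (hz1 : z < 1) (hbz : (b : ℝ) * z ^ α < 1)
    (L : ℕ) {v : ℕ} (hv : v ≤ α) :
    ∑ k ∈ Finset.range (b ^ L), levelTerm b α z v k ≤ levelBound b α z v := by
  have hb1 : (0 : ℝ) ≤ b - 1 := sub_nonneg.2 (by exact_mod_cast hb.le)
  induction L generalizing v with
  | zero =>
    rcases v with _ | v
    · simp [levelTerm, levelBound, hammingWeight_zero, mualpha_zero]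
    · simpa [levelTerm, hammingWeight_zero] using levelBound_nonneg hb hz0 hz1 hbz (v + 1)
  | succ L ih =>
    rcases v with _ | v
    · rcases Nat.eq_zero_or_pos α with rfl | hα
      · exact absurd hbz (by simpa using Nat.ne_zero_of_lt hb)
      · rw [Finset.sum_eq_single_of_mem 0 (Finset.mem_range.2 (by positivity))]
        · simp [levelTerm, levelBound, hammingWeight_zero, mualpha_zero]
        · intro k _ hk
          have := hammingWeight_pos hb hk
          exact if_neg (by omega)
    · rw [pow_succ', sum_range_mul_eq,
        Finset.sum_congr rfl fun k _ => sum_levelTerm_mul_add hb hv k, ← Finset.mul_sum,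
        Finset.sum_add_distrib, ← Finset.mul_sum, ← Finset.mul_sum,
        levelBound_succ_eq hz0 hz1 hbz v]
      gcongr
      · exact ih hv
      · exact ih (Nat.le_of_succ_le hv)

lemma sum_range_ite_dvd_add_le {y : ℝ} (hy : 0 ≤ y) (b s : ℕ) :
    ∑ c ∈ Finset.range b, (if b ∣ c + s then y else 0) ≤ y := by
  have hcard : ((Finset.range b).filter fun c => b ∣ c + s).card ≤ 1 := by
    refine Finset.card_le_one.2 fun c hc d hd => ?_
    simp only [Finset.mem_filter, Finset.mem_range] at hc hd
    exact eq_of_dvd_add_of_lt hc.1 hd.1 hc.2 hd.2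
  rw [← Finset.sum_filter, Finset.sum_const, nsmul_eq_mul]
  exact mul_le_of_le_one_left hy (by exact_mod_cast hcard)

-- The congruence on the digit sum leaves at most one choice for the last digit, which replaces
-- the factor `b - 1` of `sum_levelTerm_mul_add` by `1`.
lemma sum_foldedLevelTerm_mul_add_le (hb : 1 < b) (hz : 0 ≤ z) {v : ℕ} (hv : v < α) (k : ℕ) :
    ∑ c ∈ Finset.range b, foldedLevelTerm b α z (v + 1) (b * k + c) ≤ z ^ (v + 1) *
      ((if v + 1 = α then levelTerm b α z (v + 1) k else foldedLevelTerm b α z (v + 1) k) +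
        levelTerm b α z v k) := by
  set self := if v + 1 = α then levelTerm b α z (v + 1) k else foldedLevelTerm b α z (v + 1) k
    with hself
  have hlow := levelTerm_nonneg (b := b) (α := α) hz v k
  have hself0 : 0 ≤ self := by
    rw [hself]; split_ifs
    exacts [levelTerm_nonneg hz _ _, foldedLevelTerm_nonneg hz _ _]
  refine le_trans (Finset.sum_le_sum fun c hc => ?_)
    (sum_range_ite_dvd_add_le (y := z ^ (v + 1) * (self + levelTerm b α z v k)) (by positivity)
      b (Nat.digits b k).sum)
  have hcb := Finset.mem_range.1 hc
  have hsum : (Nat.digits b (b * k + c)).sum = c + (Nat.digits b k).sum := by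
    rw [digits_sum_eq hb, Nat.mul_add_mod, Nat.mod_eq_of_lt hcb, Nat.mul_add_div (by omega),
      Nat.div_eq_of_lt hcb, add_zero]
  rw [foldedLevelTerm, hsum]
  split_ifs with hdvd
  · rw [levelTerm_mul_add hb hv hcb]
    gcongr
    split_ifs with hc0 hvα
    · have : levelTerm b α z (v + 1) k = self := by
        rw [hc0, zero_add] at hdvd
        simp [hself, foldedLevelTerm, hdvd]
      linarith
    · rw [hself, if_pos hvα, add_comm]
    · linarith
  · rfl

lemma sum_foldedLevelTerm_le (hb : 1 < b) (hz0 : 0 ≤ z) (hz1 : z < 1) (hbz : (b : ℝ) * z ^ α < 1)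
    (L : ℕ) {v : ℕ} (hv : v < α) :
    ∑ k ∈ Finset.range (b ^ L), foldedLevelTerm b α z (v + 1) k ≤
      levelBound b α z (v + 1) / ((b : ℝ) - 1) := by
  have hb1 : (0 : ℝ) < b - 1 := sub_pos.2 (by exact_mod_cast hb)
  have hbound := levelBound_nonneg hb hz0 hz1 hbz (v + 1)
  induction L with
  | zero => simpa [foldedLevelTerm, levelTerm, hammingWeight_zero] using div_nonneg hbound hb1.le
  | succ L ih =>
    rw [pow_succ', sum_range_mul_eq]
    refine (Finset.sum_le_sum fun k _ => sum_foldedLevelTerm_mul_add_le hb hz0 hv k).trans ?_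
    rw [← Finset.mul_sum, Finset.sum_add_distrib, levelBound_succ_eq hz0 hz1 hbz v,
      mul_div_assoc, add_div, mul_div_cancel_left₀ _ hb1.ne']
    gcongr
    · rw [levelMultiplicity]
      split_ifs with hvα
      · refine (sum_levelTerm_le hb hz0 hz1 hbz L hv).trans ?_
        rw [le_div_iff₀ hb1]
        nlinarith
      · simpa using ih
    · exact sum_levelTerm_le hb hz0 hz1 hbz L hv.le

end LevelSums

section Constants

variable {b α : ℕ} {lam : ℝ}

lemma rpow_neg_lt_one (hb : 1 < b) (hlam : 0 < lam) : (b : ℝ) ^ (-lam) < 1 :=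
  Real.rpow_lt_one_of_one_lt_of_neg (by exact_mod_cast hb) (by linarith)

lemma rpow_neg_pow (b : ℕ) (lam : ℝ) (v : ℕ) :
    ((b : ℝ) ^ (-lam)) ^ v = ((b : ℝ) ^ (lam * v))⁻¹ := by
  rw [← Real.rpow_mul_natCast b.cast_nonneg, neg_mul, Real.rpow_neg b.cast_nonneg]

lemma mul_rpow_neg_pow_lt_one (hb : 1 < b) (hα : 0 < α) (hlam : 1 / (α : ℝ) < lam) :
    (b : ℝ) * ((b : ℝ) ^ (-lam)) ^ α < 1 := by
  have hb1 : (1 : ℝ) < b := by exact_mod_cast hb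
  rw [rpow_neg_pow, ← div_eq_mul_inv, div_lt_one (Real.rpow_pos_of_pos (by linarith) _)]
  refine Real.self_lt_rpow_of_one_lt hb1 ?_
  rwa [div_lt_iff₀ (by exact_mod_cast hα)] at hlam

lemma levelBound_factor_eq (hb : 0 < b) (lam c : ℝ) (i : ℕ) :
    ((b : ℝ) - 1) * ((b : ℝ) ^ (-lam)) ^ i / (1 - c * ((b : ℝ) ^ (-lam)) ^ i) =
      ((b : ℝ) - 1) / ((b : ℝ) ^ (lam * i) - c) := by
  have hpow : (b : ℝ) ^ (lam * i) ≠ 0 := (Real.rpow_pos_of_pos (by exact_mod_cast hb) _).ne'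
  rw [rpow_neg_pow, ← mul_div_mul_right _ _ hpow, inv_mul_cancel_right₀ hpow, sub_mul, one_mul,
    inv_mul_cancel_right₀ hpow]

lemma levelBound_of_lt (hb : 0 < b) (lam : ℝ) {v : ℕ} (hv : v < α) :
    levelBound b α ((b : ℝ) ^ (-lam)) v =
      ∏ i ∈ Finset.Icc 1 v, ((b : ℝ) - 1) / ((b : ℝ) ^ (lam * i) - 1) := by
  refine Finset.prod_congr rfl fun i hi => ?_
  have hiα : i ≠ α := by have := Finset.mem_Icc.1 hi; omega
  rw [levelBound_factor_eq hb, levelMultiplicity, if_neg hiα, Nat.cast_one]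

lemma levelBound_succ_self (hb : 0 < b) (lam : ℝ) (a : ℕ) :
    levelBound b (a + 1) ((b : ℝ) ^ (-lam)) (a + 1) =
      levelBound b (a + 1) ((b : ℝ) ^ (-lam)) a *
        (((b : ℝ) - 1) / ((b : ℝ) ^ (lam * (a + 1 : ℕ)) - b)) := by
  rw [levelBound, Finset.prod_Icc_succ_top (by omega), levelBound_factor_eq hb,
    levelMultiplicity, if_pos rfl, levelBound]

lemma A1_eq_sum_levelBound (hb : 1 < b) (hα : 0 < α) (hlam : 0 < lam) :
    A1 b α lam =
      (b : ℝ) / ((b : ℝ) - 1) * ∑ v ∈ Finset.Icc 1 α, levelBound b α ((b : ℝ) ^ (-lam)) v := by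
  have hb0 : 0 < b := by omega
  obtain ⟨a, rfl⟩ : ∃ a, α = a + 1 := ⟨α - 1, by omega⟩
  have hone_lt : (1 : ℝ) < (b : ℝ) ^ (lam * (a + 1 : ℕ)) :=
    Real.one_lt_rpow (by exact_mod_cast hb) (by positivity)
  rw [A1, Finset.sum_Icc_succ_top (by omega), levelBound_succ_self hb0,
    levelBound_of_lt hb0 lam a.lt_succ_self, Finset.prod_Icc_succ_top (by omega),
    Nat.add_sub_cancel, mul_left_comm, div_mul_div_comm,
    mul_div_mul_comm, div_mul_div_comm, mul_comm (_ - 1) (_ - 1 : ℝ),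
    mul_div_mul_right _ _ (sub_pos.2 hone_lt).ne']
  congr 2
  refine Finset.sum_congr rfl fun v hv => (levelBound_of_lt hb0 lam ?_).symm
  have := Finset.mem_Icc.1 hv
  omega

lemma prod_rpow_mul_div_eq (hb : 0 < b) (lam : ℝ) {v : ℕ} (hv : v < α) :
    ∏ i ∈ Finset.Icc 1 v, ((b : ℝ) ^ lam * ((b : ℝ) - 1)) / ((b : ℝ) ^ (lam * i) - 1) =
      (((b : ℝ) ^ (-lam)) ^ v)⁻¹ * levelBound b α ((b : ℝ) ^ (-lam)) v := by
  rw [levelBound_of_lt hb lam hv, ← inv_pow, ← Real.rpow_neg b.cast_nonneg, neg_neg]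
  simp only [mul_div_assoc, Finset.prod_mul_distrib, Finset.prod_const, Nat.card_Icc,
    Nat.add_sub_cancel]

lemma A2_eq_sum_levelBound (hb : 1 < b) (hα : 2 ≤ α) (lam : ℝ) :
    A2 b α lam = ∑ v ∈ Finset.Icc 2 α,
      (((b : ℝ) ^ (-lam)) ^ v)⁻¹ * (levelBound b α ((b : ℝ) ^ (-lam)) v / ((b : ℝ) - 1)) := by
  have hb0 : 0 < b := by omega
  have hb1 : (b : ℝ) - 1 ≠ 0 := (sub_pos.2 (by exact_mod_cast hb)).ne'
  obtain ⟨a, rfl⟩ : ∃ a, α = a + 1 := ⟨α - 1, by omega⟩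
  rw [A2, Finset.sum_Icc_succ_top (by omega), Nat.add_sub_cancel, levelBound_succ_self hb0,
    prod_rpow_mul_div_eq hb0 lam a.lt_succ_self, Finset.mul_sum]
  congr 1
  · refine Finset.sum_congr rfl fun v hv => ?_
    have hva : v < a + 1 := by have := Finset.mem_Icc.1 hv; omega
    rw [prod_rpow_mul_div_eq hb0 lam hva]
    ring
  · rw [pow_succ, mul_inv, ← Real.rpow_neg b.cast_nonneg, neg_neg]
    field_simp

lemma A1_nonneg (hb : 1 < b) (hα : 0 < α) (hlam : 1 / (α : ℝ) < lam) : 0 ≤ A1 b α lam := by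
  have hlam0 : 0 < lam := lt_of_le_of_lt (by positivity) hlam
  have hb1 : (1 : ℝ) ≤ b := by exact_mod_cast hb.le
  rw [A1_eq_sum_levelBound hb hα hlam0]
  exact mul_nonneg (div_nonneg b.cast_nonneg (sub_nonneg.2 hb1)) (Finset.sum_nonneg fun v _ =>
    levelBound_nonneg hb (by positivity) (rpow_neg_lt_one hb hlam0)
      (mul_rpow_neg_pow_lt_one hb hα hlam) v)

lemma A2_nonneg (hb : 1 < b) (hα : 2 ≤ α) (hlam : 1 / (α : ℝ) < lam) : 0 ≤ A2 b α lam := by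
  have hb1 : (1 : ℝ) ≤ b := by exact_mod_cast hb.le
  rw [A2_eq_sum_levelBound hb hα]
  exact Finset.sum_nonneg fun v _ => mul_nonneg (by positivity) (div_nonneg
    (levelBound_nonneg hb (by positivity)
      (rpow_neg_lt_one hb (lt_of_le_of_lt (by positivity) hlam))
      (mul_rpow_neg_pow_lt_one hb (by omega) hlam) v) (sub_nonneg.2 hb1))

end Constants

section Decay

variable {b α : ℕ} {z lam : ℝ}

/-- The `λ`-th power of the weight `b ^ (-μ_α(⌊k / b⌋))` with which `k` enters the criterion. -/
noncomputable def decay (b α : ℕ) (lam : ℝ) (k : ℕ) : ℝ≥0∞ :=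
  ENNReal.ofReal (((b : ℝ) ^ (-lam)) ^ mualpha b α (k / b))

lemma decay_one_rpow (b α : ℕ) (hlam : 0 ≤ lam) (k : ℕ) :
    decay b α 1 k ^ lam = decay b α lam k := by
  have hinv : (b : ℝ) ^ (-1 : ℝ) = (b : ℝ)⁻¹ := Real.rpow_neg_one _
  rw [decay, decay, ENNReal.ofReal_rpow_of_nonneg (by positivity) hlam, hinv,
    ← Real.rpow_pow_comm (by positivity), Real.inv_rpow b.cast_nonneg,
    Real.rpow_neg b.cast_nonneg]

lemma prod_decay_one (b α : ℕ) (u : Finset ℕ) (f : ℕ → ℕ) :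
    ∏ j ∈ u, decay b α 1 (f j) =
      ENNReal.ofReal ((b : ℝ) ^ ∑ j ∈ u, mualpha b α (f j / b))⁻¹ := by
  simp only [decay, Real.rpow_neg_one]
  rw [← ENNReal.ofReal_prod_of_nonneg fun j _ => by positivity, Finset.prod_pow_eq_pow_sum, inv_pow]

lemma tsum_ofReal_le_of_sum_range_pow_le (hb : 1 < b) {g : ℕ → ℝ} (hg : ∀ k, 0 ≤ g k) {C : ℝ}
    (hC : ∀ L, ∑ k ∈ Finset.range (b ^ L), g k ≤ C) :
    ∑' k, ENNReal.ofReal (g k) ≤ ENNReal.ofReal C := by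
  refine ENNReal.tsum_le_of_sum_range_le fun N => ?_
  rw [← ENNReal.ofReal_sum_of_nonneg fun k _ => hg k]
  refine ENNReal.ofReal_le_ofReal (le_trans ?_ (hC N))
  exact Finset.sum_le_sum_of_subset_of_nonneg
    (Finset.range_subset_range.2 (Nat.lt_pow_self hb).le) fun k _ _ => hg k

lemma tsum_sum_ofReal_le {ι : Type*} (s : Finset ι) {g : ι → ℕ → ℝ} {C : ι → ℝ}
    (hC : ∀ i ∈ s, 0 ≤ C i)
    (hg : ∀ i ∈ s, ∑' k, ENNReal.ofReal (g i k) ≤ ENNReal.ofReal (C i)) :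
    ∑' k, ∑ i ∈ s, ENNReal.ofReal (g i k) ≤ ENNReal.ofReal (∑ i ∈ s, C i) := by
  rw [Summable.tsum_finsetSum fun i _ => ENNReal.summable, ENNReal.ofReal_sum_of_nonneg hC]
  exact Finset.sum_le_sum hg

lemma pow_mualpha_le_sum_levelTerm (hb : 1 < b) (hα : 0 < α) (z : ℝ) {k : ℕ} (hk : k ≠ 0) :
    ENNReal.ofReal (z ^ mualpha b α k) ≤
      ∑ v ∈ Finset.Icc 1 α, ENNReal.ofReal (levelTerm b α z v k) := by
  have hlevel : min (hammingWeight b k) α ∈ Finset.Icc 1 α :=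
    Finset.mem_Icc.2 ⟨le_min (hammingWeight_pos hb hk) hα, min_le_right _ _⟩
  refine le_trans ?_ (Finset.single_le_sum (fun _ _ => zero_le) hlevel)
  simp [levelTerm]

lemma tsum_Eset_decay_le (hb : 1 < b) (hα : 0 < α) (hlam : 1 / (α : ℝ) < lam) :
    ∑' k : Eset b, decay b α lam k ≤ ENNReal.ofReal (A1 b α lam) := by
  have hlam0 : 0 < lam := lt_of_le_of_lt (by positivity) hlam
  have hb1 : (0 : ℝ) < b - 1 := sub_pos.2 (by exact_mod_cast hb)
  have hz0 : 0 ≤ (b : ℝ) ^ (-lam) := by positivity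
  have hz1 := rpow_neg_lt_one hb hlam0
  have hbz := mul_rpow_neg_pow_lt_one hb hα hlam
  have hbound := levelBound_nonneg hb hz0 hz1 hbz
  have hfactor : 1 ≤ (b : ℝ) / (b - 1) := by rw [le_div_iff₀ hb1]; linarith
  calc ∑' k : Eset b, decay b α lam k
      ≤ ∑' k : Eset b, ∑ v ∈ Finset.Icc 1 α,
          ENNReal.ofReal (levelTerm b α ((b : ℝ) ^ (-lam)) v (k / b)) :=
        ENNReal.tsum_le_tsum fun k =>
          pow_mualpha_le_sum_levelTerm hb hα _ (div_ne_zero_of_mem_Eset hb k.2)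
    _ ≤ ∑' l, ∑ v ∈ Finset.Icc 1 α, ENNReal.ofReal (levelTerm b α ((b : ℝ) ^ (-lam)) v l) :=
        ENNReal.tsum_comp_le_tsum_of_injective (injOn_div_Eset hb).injective _
    _ ≤ ENNReal.ofReal (∑ v ∈ Finset.Icc 1 α, levelBound b α ((b : ℝ) ^ (-lam)) v) :=
        tsum_sum_ofReal_le _ (fun v _ => hbound v) fun v hv =>
          tsum_ofReal_le_of_sum_range_pow_le hb (levelTerm_nonneg hz0 v) fun L =>
            sum_levelTerm_le hb hz0 hz1 hbz L (Finset.mem_Icc.1 hv).2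
    _ ≤ ENNReal.ofReal (A1 b α lam) := by
        rw [A1_eq_sum_levelBound hb hα hlam0]
        exact ENNReal.ofReal_le_ofReal
          (le_mul_of_one_le_left (Finset.sum_nonneg fun v _ => hbound v) hfactor)

lemma pow_dvd_of_trunc_eq_zero (hb : 0 < b) {n k : ℕ} (h : trunc b n k = 0) : b ^ n ∣ k := by
  have hdigit : ∀ i < n, b ∣ digit b k i := by
    intro i hi
    have hcoeff := congrArg (Polynomial.coeff · i) h
    simpa [trunc, Polynomial.coeff_X_pow, hi, ZMod.natCast_eq_zero_iff] using hcoeff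
  clear h
  induction n with
  | zero => simp
  | succ n ih =>
    obtain ⟨l, rfl⟩ := ih fun i hi => hdigit i (hi.trans n.lt_succ_self)
    have hlast := hdigit n n.lt_succ_self
    rw [digit, Nat.mul_div_cancel_left _ (by positivity), Nat.dvd_mod_iff dvd_rfl] at hlast
    exact pow_succ b n ▸ Nat.mul_dvd_mul_left _ hlast

lemma pow_pred_mul_le (hz0 : 0 < z) (hz1 : z ≤ 1) {n v : ℕ} (hn : 0 < n) (hv : 2 ≤ v) :
    z ^ ((n - 1) * v) ≤ z ^ (2 * n) * (z ^ v)⁻¹ := by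
  rw [le_mul_inv_iff₀ (by positivity), ← pow_add]
  refine pow_le_pow_of_le_one hz0.le hz1 ?_
  calc 2 * n ≤ v * n := Nat.mul_le_mul_right n hv
    _ = (n - 1) * v + v := by
      rw [← Nat.succ_mul, Nat.succ_eq_add_one, Nat.sub_add_cancel hn, mul_comm]

-- Here `⌊k / b⌋ = b ^ (n - 1) * l` with `l ∈ E`, and multiplication by `b ^ (n - 1)` raises each of
-- the at least two positions that enter `μ_α(l)` by `n - 1`.
lemma decay_le_sum_foldedLevelTerm (hb : 1 < b) (hα : 2 ≤ α) {n k : ℕ} (hn : 0 < n)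
    (hlam : 0 ≤ lam) (hk : k ∈ Eset b) (htrunc : trunc b n k = 0) :
    decay b α lam k ≤ ∑ v ∈ Finset.Icc 2 α, ENNReal.ofReal
      (((b : ℝ) ^ (-lam)) ^ (2 * n) * (((b : ℝ) ^ (-lam)) ^ v)⁻¹ *
        foldedLevelTerm b α ((b : ℝ) ^ (-lam)) v (k / b ^ n)) := by
  obtain ⟨l, rfl⟩ := pow_dvd_of_trunc_eq_zero (by omega) htrunc
  have hl := mem_Eset_of_pow_mul_mem hb hk
  have hb0 : (0 : ℝ) < b := by exact_mod_cast Nat.zero_lt_of_lt hb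
  have hz0 : 0 < (b : ℝ) ^ (-lam) := Real.rpow_pos_of_pos hb0 _
  have hz1 : (b : ℝ) ^ (-lam) ≤ 1 :=
    Real.rpow_le_one_of_one_le_of_nonpos (by exact_mod_cast hb.le) (by linarith)
  have hdiv : b ^ n * l / b = b ^ (n - 1) * l := by
    rw [← Nat.sub_add_cancel hn, pow_succ', mul_assoc, Nat.mul_div_cancel_left _ (by omega),
      Nat.add_sub_cancel]
  have hlevel : 2 ≤ min (hammingWeight b l) α :=
    le_min (two_le_hammingWeight_of_mem_Eset hb hl) hα
  refine le_trans ?_ (Finset.single_le_sum (fun _ _ => zero_le)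
    (Finset.mem_Icc.2 ⟨hlevel, min_le_right _ _⟩))
  rw [Nat.mul_div_cancel_left l (by positivity), decay, hdiv, mualpha_pow_mul hb, foldedLevelTerm,
    if_pos hl.2, levelTerm, if_pos rfl, pow_add, mul_comm]
  gcongr
  exact pow_pred_mul_le hz0 hz1 hn hlevel

lemma injOn_div_pow_of_trunc_eq_zero (hb : 0 < b) (n : ℕ) :
    Set.InjOn (· / b ^ n) {k | trunc b n k = 0} := fun _ hk _ hl =>
  Nat.div_left_inj (pow_dvd_of_trunc_eq_zero hb hk) (pow_dvd_of_trunc_eq_zero hb hl) |>.1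

lemma tsum_Eset_trunc_eq_zero_decay_le (hb : 1 < b) (hα : 2 ≤ α) (hlam : 1 / (α : ℝ) < lam)
    {n : ℕ} (hn : 0 < n) :
    ∑' k : ↥(Eset b ∩ {k | trunc b n k = 0}), decay b α lam k ≤
      ENNReal.ofReal (((b : ℝ) ^ (-lam)) ^ (2 * n) * A2 b α lam) := by
  have hlam0 : 0 < lam := lt_of_le_of_lt (by positivity) hlam
  have hb0 : 0 < b := by omega
  have hb1 : (0 : ℝ) ≤ b - 1 := sub_nonneg.2 (by exact_mod_cast hb.le)
  have hz1 := rpow_neg_lt_one hb hlam0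
  have hbz := mul_rpow_neg_pow_lt_one hb (by omega) hlam
  rw [A2_eq_sum_levelBound hb hα, Finset.mul_sum]
  set z := (b : ℝ) ^ (-lam)
  have hz0 : 0 ≤ z := by positivity
  calc ∑' k : ↥(Eset b ∩ {k | trunc b n k = 0}), decay b α lam k
      ≤ ∑' k : ↥(Eset b ∩ {k | trunc b n k = 0}), ∑ v ∈ Finset.Icc 2 α, ENNReal.ofReal
          (z ^ (2 * n) * (z ^ v)⁻¹ * foldedLevelTerm b α z v (k / b ^ n)) :=
        ENNReal.tsum_le_tsum fun k =>
          decay_le_sum_foldedLevelTerm hb hα hn hlam0.le k.2.1 k.2.2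
    _ ≤ ∑' l, ∑ v ∈ Finset.Icc 2 α, ENNReal.ofReal
          (z ^ (2 * n) * (z ^ v)⁻¹ * foldedLevelTerm b α z v l) :=
        ENNReal.tsum_comp_le_tsum_of_injective
          ((injOn_div_pow_of_trunc_eq_zero hb0 n).mono Set.inter_subset_right).injective _
    _ ≤ _ := tsum_sum_ofReal_le _ (fun v _ => ?_) fun v hv => ?_
  · have := levelBound_nonneg hb hz0 hz1 hbz v
    positivity
  · obtain ⟨u, rfl⟩ : ∃ u, v = u + 1 := ⟨v - 1, by have := Finset.mem_Icc.1 hv; omega⟩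
    refine tsum_ofReal_le_of_sum_range_pow_le hb (fun l => ?_) fun L => ?_
    · exact mul_nonneg (by positivity) (foldedLevelTerm_nonneg hz0 _ _)
    · rw [← Finset.mul_sum, ← mul_assoc]
      gcongr
      exact sum_foldedLevelTerm_le hb hz0 hz1 hbz L (Finset.mem_Icc.1 hv).2

end Decay

section Polynomials

lemma degree_trunc_lt (b n k : ℕ) : (trunc b n k).degree < (n : WithBot ℕ) := by
  rw [← Polynomial.mem_degreeLT]
  refine Submodule.sum_mem _ fun i hi => Polynomial.mem_degreeLT.2 ?_
  exact (Polynomial.degree_C_mul_X_pow_le _ _).trans_lt (by exact_mod_cast Finset.mem_range.1 hi)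

lemma trunc_zero_right (b n : ℕ) : trunc b n 0 = 0 := by simp [trunc, digit]

variable {F : Type*} [Field F]

lemma encard_degreeLT (F : Type*) [Field F] [Finite F] (n : ℕ) :
    (Polynomial.degreeLT F n : Set F[X]).encard = (Nat.card F ^ n : ℕ) := by
  have e := (Polynomial.degreeLTEquiv F n).toEquiv
  have : Finite (Polynomial.degreeLT F n) := Finite.of_equiv _ e.symm
  rw [Set.encard, SetLike.coe_sort_coe, ENat.card_eq_coe_natCard, Nat.card_congr e,
    Nat.card_fun, Nat.card_fin]

lemma injOn_add_mul_mod {p r t : F[X]} (hp : Irreducible p) (ht : ¬ p ∣ t) {n : ℕ}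
    (hpdeg : p.degree = (n : WithBot ℕ)) :
    Set.InjOn (fun a => (r + t * a) % p) (Polynomial.degreeLT F n) := by
  intro a ha c hc hac
  have hdvd : p ∣ t * (a - c) := by
    rw [mul_sub, ← add_sub_add_left_eq_sub (t * a) (t * c) r]
    exact EuclideanDomain.mod_eq_zero.1 ((Polynomial.sub_mod ..).trans (sub_eq_zero.2 hac))
  have hlt : (a - c).degree < p.degree := by
    rw [hpdeg]
    exact Polynomial.mem_degreeLT.1 (Submodule.sub_mem _ ha hc)
  exact sub_eq_zero.1
    (Polynomial.eq_zero_of_dvd_of_degree_lt ((hp.prime.dvd_or_dvd hdvd).resolve_left ht) hlt)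

lemma encard_degree_add_mul_mod_lt_le [Finite F] {p t : F[X]} (hp : Irreducible p) (ht : ¬ p ∣ t)
    {n : ℕ} (hpdeg : p.degree = (n : WithBot ℕ)) (r : F[X]) (k : ℕ) :
    {a : Polynomial.degreeLT F n | ((r + t * a) % p).degree < (k : WithBot ℕ)}.encard ≤
      (Nat.card F ^ k : ℕ) := by
  rw [← encard_degreeLT]
  refine Set.encard_le_encard_of_injOn (f := fun a => (r + t * a.1) % p)
    (fun a ha => Polynomial.mem_degreeLT.2 ha) fun a _ c _ hac => ?_
  exact Subtype.ext (injOn_add_mul_mod hp ht hpdeg a.2 c.2 hac)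

end Polynomials

section Criterion

variable {b : ℕ} [Fact b.Prime] {c w : ℕ → ℝ≥0∞} {lam : ℝ} {m n τ : ℕ} {p : (ZMod b)[X]}
  {q : ℕ → (ZMod b)[X]}

/-- The index set of the inner sum of `Bcrit`: the elements of the dual polynomial lattice whose
components lie in `Eset b` inside `u` and vanish outside of `u`. -/
def foldedDual (m n : ℕ) (p : (ZMod b)[X]) (τ : ℕ) (q : ℕ → (ZMod b)[X]) (u : Finset ℕ) :
    Set (ℕ → ℕ) :=
  {f | (∀ j ∈ u, f j ∈ Eset b) ∧ (∀ j ∉ u, f j = 0) ∧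
    ((∑ j ∈ Finset.range τ, trunc b n (f j) * q j) % p).degree < ((n - m : ℕ) : WithBot ℕ)}

/-- The inner sum of `Bcrit` for a general decay `w` in place of `b ^ (-μ_α(⌊k / b⌋))`. -/
noncomputable def dualSum (w : ℕ → ℝ≥0∞) (m n : ℕ) (p : (ZMod b)[X]) (τ : ℕ)
    (q : ℕ → (ZMod b)[X]) (u : Finset ℕ) : ℝ≥0∞ :=
  ∑' f : foldedDual m n p τ q u, ∏ j ∈ u, w (f.1 j)

/-- The criterion `Bcrit` for general component weights `c` and a general decay `w`, with values
in `ℝ≥0∞` so that no summability has to be tracked. -/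
noncomputable def criterion (c w : ℕ → ℝ≥0∞) (m n : ℕ) (p : (ZMod b)[X]) (τ : ℕ)
    (q : ℕ → (ZMod b)[X]) : ℝ≥0∞ :=
  ∑ u ∈ (Finset.range τ).powerset.filter (fun u => u.Nonempty),
    (∏ j ∈ u, c j) * dualSum w m n p τ q u

/-- The part of the criterion for `τ + 1` components that involves the last component `q τ`. -/
noncomputable def increment (c w : ℕ → ℝ≥0∞) (m n : ℕ) (p : (ZMod b)[X]) (τ : ℕ)
    (q : ℕ → (ZMod b)[X]) : ℝ≥0∞ :=
  ∑ v ∈ (Finset.range τ).powerset,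
    (∏ j ∈ insert τ v, c j) * dualSum w m n p (τ + 1) q (insert τ v)

lemma sum_range_mul_update_self {R : Type*} [NonUnitalNonAssocSemiring R] (τ : ℕ) (g q : ℕ → R)
    (a : R) :
    ∑ j ∈ Finset.range τ, g j * Function.update q τ a j = ∑ j ∈ Finset.range τ, g j * q j :=
  Finset.sum_congr rfl fun j hj => by rw [Function.update_of_ne (Finset.mem_range.1 hj).ne]

lemma foldedDual_subset (m n : ℕ) (p : (ZMod b)[X]) (τ : ℕ) (q : ℕ → (ZMod b)[X])
    (u : Finset ℕ) : foldedDual m n p τ q u ⊆ zeroExtendedFamilies (Eset b) u :=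
  fun _ hf => ⟨hf.1, hf.2.1⟩

lemma foldedDual_succ_of_subset {u : Finset ℕ} (hu : u ⊆ Finset.range τ) :
    foldedDual m n p (τ + 1) q u = foldedDual m n p τ q u := by
  ext f
  refine and_congr_right fun _ => and_congr_right fun hf => ?_
  have hτ : f τ = 0 := hf τ fun h => Finset.notMem_range_self (hu h)
  rw [Finset.sum_range_succ, hτ, trunc_zero_right, zero_mul, add_zero]

lemma foldedDual_update_self (m n : ℕ) (p : (ZMod b)[X]) (τ : ℕ) (q : ℕ → (ZMod b)[X])
    (a : (ZMod b)[X]) (u : Finset ℕ) :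
    foldedDual m n p τ (Function.update q τ a) u = foldedDual m n p τ q u := by
  ext f
  refine and_congr_right fun _ => and_congr_right fun _ => ?_
  rw [sum_range_mul_update_self]

lemma criterion_update_self (c w : ℕ → ℝ≥0∞) (m n : ℕ) (p : (ZMod b)[X]) (τ : ℕ)
    (q : ℕ → (ZMod b)[X]) (a : (ZMod b)[X]) :
    criterion c w m n p τ (Function.update q τ a) = criterion c w m n p τ q :=
  Finset.sum_congr rfl fun u _ => by rw [dualSum, foldedDual_update_self, dualSum]

lemma criterion_succ (c w : ℕ → ℝ≥0∞) (m n : ℕ) (p : (ZMod b)[X]) (τ : ℕ)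
    (q : ℕ → (ZMod b)[X]) :
    criterion c w m n p (τ + 1) q = criterion c w m n p τ q + increment c w m n p τ q := by
  rw [criterion, Finset.sum_filter, Finset.range_add_one, Finset.sum_powerset_insert (by simp),
    criterion, Finset.sum_filter, increment]
  congr 1
  · refine Finset.sum_congr rfl fun u hu => ?_
    rw [dualSum, foldedDual_succ_of_subset (Finset.mem_powerset.1 hu), dualSum]
  · exact Finset.sum_congr rfl fun u _ => if_pos (Finset.insert_nonempty _ _)

lemma dualSum_rpow_le (h0 : 0 < lam) (h1 : lam ≤ 1) (u : Finset ℕ) :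
    dualSum w m n p τ q u ^ lam ≤ dualSum (fun k => w k ^ lam) m n p τ q u := by
  refine (tsum_rpow_le_tsum_rpow _ h0 h1).trans_eq ?_
  simp only [dualSum, ENNReal.prod_rpow_of_nonneg h0.le]

lemma increment_rpow_le (h0 : 0 < lam) (h1 : lam ≤ 1) :
    increment c w m n p τ q ^ lam ≤
      increment (fun j => c j ^ lam) (fun k => w k ^ lam) m n p τ q := by
  refine (sum_rpow_le_sum_rpow _ _ h0 h1).trans (Finset.sum_le_sum fun v _ => ?_)
  rw [ENNReal.mul_rpow_of_nonneg _ _ h0.le, ← ENNReal.prod_rpow_of_nonneg h0.le]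
  gcongr
  exact dualSum_rpow_le h0 h1 _

lemma dualSum_le_pow (w : ℕ → ℝ≥0∞) (m n : ℕ) (p : (ZMod b)[X]) (τ : ℕ) (q : ℕ → (ZMod b)[X])
    (u : Finset ℕ) : dualSum w m n p τ q u ≤ (∑' k : Eset b, w k) ^ u.card := by
  rw [← Finset.prod_const]
  exact (ENNReal.tsum_mono_subtype (fun f : ℕ → ℕ => ∏ j ∈ u, w (f j))
    (foldedDual_subset m n p τ q u)).trans
    (tsum_prod_le_prod_tsum (Eset b) u fun _ => w)

lemma dualSum_ne_top (hw : ∑' k : Eset b, w k ≠ ⊤) (u : Finset ℕ) :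
    dualSum w m n p τ q u ≠ ⊤ :=
  ne_top_of_le_ne_top (ENNReal.pow_ne_top hw) (dualSum_le_pow w m n p τ q u)

lemma criterion_term_ne_top (hc : ∀ j, c j ≠ ⊤) (hw : ∑' k : Eset b, w k ≠ ⊤) (u : Finset ℕ) :
    (∏ j ∈ u, c j) * dualSum w m n p τ q u ≠ ⊤ :=
  ENNReal.mul_ne_top (ENNReal.prod_ne_top fun j _ => hc j) (dualSum_ne_top hw u)

lemma criterion_ne_top (hc : ∀ j, c j ≠ ⊤) (hw : ∑' k : Eset b, w k ≠ ⊤) :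
    criterion c w m n p τ q ≠ ⊤ :=
  ENNReal.sum_ne_top.2 fun u _ => criterion_term_ne_top hc hw u

lemma increment_le_increment_update (hc : ∀ j, c j ≠ ⊤) (hw : ∑' k : Eset b, w k ≠ ⊤)
    {a : (ZMod b)[X]} (h : criterion c w m n p (τ + 1) q ≤
      criterion c w m n p (τ + 1) (Function.update q τ a)) :
    increment c w m n p τ q ≤ increment c w m n p τ (Function.update q τ a) := by
  rw [criterion_succ, criterion_succ, criterion_update_self] at h
  exact (ENNReal.add_le_add_iff_left (criterion_ne_top hc hw)).1 h

end Criterion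

section Averaging

variable {b : ℕ} [Fact b.Prime] {c w : ℕ → ℝ≥0∞} {lam : ℝ} {m n τ : ℕ} {p : (ZMod b)[X]}
  {q : ℕ → (ZMod b)[X]}

/-- A bound for the number of `a` with `deg a < n` for which a vector with last component `k` lies
in the dual lattice of `(q_1, …, q_τ, a)`. -/
noncomputable def hitBound (b m n k : ℕ) : ℝ≥0∞ :=
  (b : ℝ≥0∞) ^ (n - m) + {k | trunc b n k = 0}.indicator (fun _ => (b : ℝ≥0∞) ^ n) k

lemma tsum_hitBound_mul (b m n : ℕ) (w : ℕ → ℝ≥0∞) :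
    ∑' k : Eset b, hitBound b m n k * w k = (b : ℝ≥0∞) ^ (n - m) * ∑' k : Eset b, w k +
      (b : ℝ≥0∞) ^ n * ∑' k : ↥(Eset b ∩ {k | trunc b n k = 0}), w k := by
  have hindicator : ∀ k, {k | trunc b n k = 0}.indicator (fun _ => (b : ℝ≥0∞) ^ n) k * w k =
      {k | trunc b n k = 0}.indicator (fun k => (b : ℝ≥0∞) ^ n * w k) k := fun k =>
    (Set.indicator_mul_left _ _ _).symm
  simp only [hitBound, add_mul, ENNReal.tsum_add, ENNReal.tsum_mul_left, hindicator]
  rw [tsum_subtype (Eset b) (Set.indicator _ _), Set.indicator_indicator, ← tsum_subtype,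
    ENNReal.tsum_mul_left]

lemma card_degreeLT_zmod (b n : ℕ) [Fact b.Prime] :
    (ENat.card (Polynomial.degreeLT (ZMod b) n) : ℝ≥0∞) = (b : ℝ≥0∞) ^ n := by
  have h := encard_degreeLT (ZMod b) n
  rw [Nat.card_zmod] at h
  exact (congrArg ENat.toENNReal h).trans (by simp)

lemma encard_update_mem_foldedDual_le (hp : Irreducible p) (hpdeg : p.degree = (n : WithBot ℕ))
    (u : Finset ℕ) (f : ℕ → ℕ) :
    (({a : Polynomial.degreeLT (ZMod b) n |
      f ∈ foldedDual m n p (τ + 1) (Function.update q τ a) u}.encard : ℕ∞) : ℝ≥0∞) ≤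
        hitBound b m n (f τ) := by
  by_cases htrunc : trunc b n (f τ) = 0
  · refine le_trans ?_ le_add_self
    rw [Set.indicator_of_mem (by exact htrunc), ← card_degreeLT_zmod, ← Set.encard_univ]
    exact ENat.toENNReal_le.2 (Set.encard_le_encard (Set.subset_univ _))
  · refine le_trans ?_ le_self_add
    have hdvd : ¬ p ∣ trunc b n (f τ) := fun h => htrunc
      (Polynomial.eq_zero_of_dvd_of_degree_lt h (hpdeg ▸ degree_trunc_lt b n (f τ)))
    have hcount := encard_degree_add_mul_mod_lt_le hp hdvd hpdeg
      (∑ j ∈ Finset.range τ, trunc b n (f j) * q j) (n - m)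
    rw [Nat.card_zmod] at hcount
    refine (ENat.toENNReal_le.2 ((Set.encard_le_encard fun a ha => ?_).trans hcount)).trans
      (by simp)
    have hdeg := ha.2.2
    rwa [Finset.sum_range_succ, Function.update_self, sum_range_mul_update_self] at hdeg

lemma tsum_dualSum_update_le (hp : Irreducible p) (hpdeg : p.degree = (n : WithBot ℕ))
    {v : Finset ℕ} (hτ : τ ∉ v) :
    ∑' a : Polynomial.degreeLT (ZMod b) n,
        dualSum w m n p (τ + 1) (Function.update q τ a) (insert τ v) ≤
      (∑' k : Eset b, hitBound b m n k * w k) * (∑' k : Eset b, w k) ^ v.card := by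
  set g : ℕ → ℕ → ℝ≥0∞ := Function.update (fun _ => w) τ fun k => hitBound b m n k * w k
  have hg : ∀ j ∈ v, g j = w := fun j hj => Function.update_of_ne (ne_of_mem_of_not_mem hj hτ) _ _
  have hgτ : g τ = fun k => hitBound b m n k * w k := Function.update_self ..
  have hprod : ∀ f : ℕ → ℕ, ∏ j ∈ insert τ v, g j (f j) =
      hitBound b m n (f τ) * ∏ j ∈ insert τ v, w (f j) := by
    intro f
    rw [Finset.prod_insert hτ, Finset.prod_insert hτ, hgτ, mul_assoc,
      Finset.prod_congr rfl fun j hj => by rw [hg j hj]]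
  calc _ ≤ ∑' f : zeroExtendedFamilies (Eset b) (insert τ v),
          hitBound b m n (f.1 τ) * ∏ j ∈ insert τ v, w (f.1 j) :=
        tsum_tsum_subtype_le_of_encard_le (fun _ => foldedDual_subset ..)
          (N := fun f => hitBound b m n (f τ))
          (fun f _ => encard_update_mem_foldedDual_le hp hpdeg _ f)
          (fun f => ∏ j ∈ insert τ v, w (f j))
    _ ≤ ∏ j ∈ insert τ v, ∑' k : Eset b, g j k := by
        simpa only [hprod] using tsum_prod_le_prod_tsum (Eset b) (insert τ v) g
    _ = _ := by
        rw [Finset.prod_insert hτ, hgτ, ← Finset.prod_const,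
          Finset.prod_congr rfl fun j hj => by rw [hg j hj]]

lemma tsum_increment_update_le (hp : Irreducible p) (hpdeg : p.degree = (n : WithBot ℕ)) :
    ∑' a : Polynomial.degreeLT (ZMod b) n, increment c w m n p τ (Function.update q τ a) ≤
      c τ * (∑' k : Eset b, hitBound b m n k * w k) *
        ∏ j ∈ Finset.range τ, (1 + c j * ∑' k : Eset b, w k) := by
  simp only [increment]
  rw [Summable.tsum_finsetSum fun _ _ => ENNReal.summable, Finset.prod_one_add, Finset.mul_sum]
  refine Finset.sum_le_sum fun v hv => ?_
  have hτ : τ ∉ v := fun h => Finset.notMem_range_self (Finset.mem_powerset.1 hv h)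
  rw [ENNReal.tsum_mul_left, Finset.prod_insert hτ, Finset.prod_mul_distrib, Finset.prod_const,
    mul_assoc, mul_assoc, mul_left_comm (∑' k : Eset b, _)]
  gcongr
  exact tsum_dualSum_update_le hp hpdeg hτ

-- The minimum over `a` is at most the average over the `b ^ n` polynomials `a` of degree `< n`.
lemma pow_mul_increment_rpow_le (hp : Irreducible p) (hpdeg : p.degree = (n : WithBot ℕ))
    (h0 : 0 < lam) (h1 : lam ≤ 1)
    (hmin : ∀ a : (ZMod b)[X], a.degree < (n : WithBot ℕ) →
      increment c w m n p τ q ≤ increment c w m n p τ (Function.update q τ a)) :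
    (b : ℝ≥0∞) ^ n * increment c w m n p τ q ^ lam ≤
      c τ ^ lam * (∑' k : Eset b, hitBound b m n k * w k ^ lam) *
        ∏ j ∈ Finset.range τ, (1 + c j ^ lam * ∑' k : Eset b, w k ^ lam) := by
  rw [← card_degreeLT_zmod, ← ENNReal.tsum_const]
  refine (ENNReal.tsum_le_tsum fun a => ?_).trans (tsum_increment_update_le
    (c := fun j => c j ^ lam) (w := fun k => w k ^ lam) (q := q) (τ := τ) hp hpdeg)
  exact (ENNReal.rpow_le_rpow (hmin a (Polynomial.mem_degreeLT.1 a.2)) h0.le).trans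
    (increment_rpow_le h0 h1)

lemma criterion_rpow_add_le (hp : Irreducible p) (hpdeg : p.degree = (n : WithBot ℕ))
    (h0 : 0 < lam) (h1 : lam ≤ 1) {A K : ℝ≥0∞}
    (hA : ∑' k : Eset b, w k ^ lam ≤ A)
    (hAK : ∑' k : Eset b, hitBound b m n k * w k ^ lam ≤ (b : ℝ≥0∞) ^ n * (K * A))
    (hmin : ∀ t < τ, ∀ a : (ZMod b)[X], a.degree < (n : WithBot ℕ) →
      increment c w m n p t q ≤ increment c w m n p t (Function.update q t a)) :
    criterion c w m n p τ q ^ lam + K ≤ K * ∏ j ∈ Finset.range τ, (1 + c j ^ lam * A) := by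
  have hb0 : (b : ℝ≥0∞) ^ n ≠ 0 := pow_ne_zero _ (by exact_mod_cast (Fact.out : b.Prime).ne_zero)
  have hbtop : (b : ℝ≥0∞) ^ n ≠ ⊤ := ENNReal.pow_ne_top (ENNReal.natCast_ne_top b)
  induction τ with
  | zero => simp [criterion, Finset.sum_filter, h0]
  | succ t ih =>
    have hincrement : increment c w m n p t q ^ lam ≤
        K * (∏ j ∈ Finset.range t, (1 + c j ^ lam * A)) * (c t ^ lam * A) := by
      rw [← ENNReal.mul_le_mul_iff_right hb0 hbtop]
      calc _ ≤ c t ^ lam * ((b : ℝ≥0∞) ^ n * (K * A)) *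
              ∏ j ∈ Finset.range t, (1 + c j ^ lam * A) := by
            refine (pow_mul_increment_rpow_le hp hpdeg h0 h1 (hmin t t.lt_succ_self)).trans ?_
            gcongr
        _ = _ := by ring
    calc criterion c w m n p (t + 1) q ^ lam + K
        ≤ criterion c w m n p t q ^ lam + K + increment c w m n p t q ^ lam := by
          rw [criterion_succ, add_right_comm]
          gcongr
          exact ENNReal.rpow_add_le_add_rpow _ _ h0.le h1
      _ ≤ K * ∏ j ∈ Finset.range (t + 1), (1 + c j ^ lam * A) := by
          rw [Finset.prod_range_succ, ← mul_assoc, mul_add, mul_one]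
          exact add_le_add (ih fun s hs => hmin s (hs.trans t.lt_succ_self)) hincrement

end Averaging

section Main

variable {b α m n : ℕ} {lam : ℝ}

lemma pow_sub_le_pow_mul_rpow_min (hb : 0 < b) (hlam : 0 < lam) (hmn : m ≤ n) (x : ℝ) :
    (b : ℝ) ^ (n - m) ≤ (b : ℝ) ^ n * ((b : ℝ) ^ (-(min ((m : ℝ) / lam) x))) ^ lam := by
  have hb0 : (0 : ℝ) < b := by exact_mod_cast hb
  have hmin : min ((m : ℝ) / lam) x * lam ≤ m := (le_div_iff₀ hlam).1 (min_le_left _ _)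
  rw [← Real.rpow_mul hb0.le, ← Real.rpow_natCast, ← Real.rpow_natCast, ← Real.rpow_add hb0,
    Nat.cast_sub hmn]
  exact Real.rpow_le_rpow_of_exponent_le (by exact_mod_cast hb) (by linarith)

lemma rpow_neg_pow_le_rpow_min (hb : 0 < b) (hlam : 0 ≤ lam) (x : ℝ) (r : ℕ) :
    ((b : ℝ) ^ (-lam)) ^ r ≤ ((b : ℝ) ^ (-(min x r))) ^ lam := by
  have hb0 : (0 : ℝ) ≤ b := Nat.cast_nonneg b
  have hmin : min x r * lam ≤ r * lam := mul_le_mul_of_nonneg_right (min_le_right _ _) hlam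
  rw [← Real.rpow_natCast, ← Real.rpow_mul hb0, ← Real.rpow_mul hb0]
  exact Real.rpow_le_rpow_of_exponent_le (by exact_mod_cast hb) (by linarith)

lemma tsum_hitBound_mul_decay_le (hb : 1 < b) (hα : 2 ≤ α) (hlam : 1 / (α : ℝ) < lam)
    (hn : 0 < n) (hmn : m ≤ n) :
    ∑' k : Eset b, hitBound b m n k * decay b α lam k ≤ (b : ℝ≥0∞) ^ n *
      (ENNReal.ofReal (((b : ℝ) ^ (-(min ((m : ℝ) / lam) (2 * n)))) ^ lam) *
        ENNReal.ofReal (A1 b α lam + A2 b α lam)) := by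
  have hlam0 : 0 < lam := lt_of_le_of_lt (by positivity) hlam
  have hA1 := A1_nonneg hb (by lia) hlam
  have hA2 := A2_nonneg hb hα hlam
  have hK1 := pow_sub_le_pow_mul_rpow_min (Nat.zero_lt_of_lt hb) hlam0 hmn (2 * n)
  have hK2 := rpow_neg_pow_le_rpow_min (Nat.zero_lt_of_lt hb) hlam0.le ((m : ℝ) / lam) (2 * n)
  push_cast at hK2
  set K : ℝ := ((b : ℝ) ^ (-(min ((m : ℝ) / lam) (2 * n)))) ^ lam
  have hcast : ∀ r : ℕ, (b : ℝ≥0∞) ^ r = ENNReal.ofReal ((b : ℝ) ^ r) := fun r => by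
    rw [ENNReal.ofReal_pow b.cast_nonneg, ENNReal.ofReal_natCast]
  calc _ ≤ (b : ℝ≥0∞) ^ (n - m) * ENNReal.ofReal (A1 b α lam) + (b : ℝ≥0∞) ^ n *
          ENNReal.ofReal (((b : ℝ) ^ (-lam)) ^ (2 * n) * A2 b α lam) := by
        rw [tsum_hitBound_mul]
        gcongr
        exacts [tsum_Eset_decay_le hb (by lia) hlam,
          tsum_Eset_trunc_eq_zero_decay_le hb hα hlam hn]
    _ = ENNReal.ofReal ((b : ℝ) ^ (n - m) * A1 b α lam +
          (b : ℝ) ^ n * (((b : ℝ) ^ (-lam)) ^ (2 * n) * A2 b α lam)) := by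
        rw [hcast, hcast, ← ENNReal.ofReal_mul (by positivity),
          ← ENNReal.ofReal_mul (by positivity),
          ← ENNReal.ofReal_add (by positivity) (by positivity)]
    _ ≤ ENNReal.ofReal ((b : ℝ) ^ n * K * A1 b α lam + (b : ℝ) ^ n * (K * A2 b α lam)) := by
        gcongr
    _ = _ := by
        rw [hcast, ← ENNReal.ofReal_mul (by positivity), ← ENNReal.ofReal_mul (by positivity)]
        congr 1
        ring

lemma tsum_Eset_decay_one_ne_top (hb : 1 < b) (hα : 2 ≤ α) :
    ∑' k : Eset b, decay b α 1 k ≠ ⊤ :=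
  ne_top_of_le_ne_top ENNReal.ofReal_ne_top <| tsum_Eset_decay_le hb (by lia) <| by
    rw [one_div]
    exact inv_lt_one_of_one_lt₀ (by exact_mod_cast hα)

/-- The factor `(γ_j D) ^ (1 / 2)` by which the `j`-th component enters the criterion. -/
noncomputable def componentWeight (γ : ℕ → ℝ) (D : ℝ) (j : ℕ) : ℝ≥0∞ :=
  ENNReal.ofReal (√(γ j) * √D)

lemma componentWeight_ne_top (γ : ℕ → ℝ) (D : ℝ) (j : ℕ) : componentWeight γ D j ≠ ⊤ :=
  ENNReal.ofReal_ne_top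

lemma one_add_componentWeight_rpow_mul {γ : ℕ → ℝ} {D A : ℝ} {j : ℕ} (hγ : 0 ≤ γ j) (hD : 0 ≤ D)
    (hA : 0 ≤ A) (hlam : 0 ≤ lam) :
    1 + componentWeight γ D j ^ lam * ENNReal.ofReal A =
      ENNReal.ofReal (1 + γ j ^ (lam / 2) * D ^ (lam / 2) * A) := by
  have hsqrt : ∀ {x : ℝ}, 0 ≤ x → √x ^ lam = x ^ (lam / 2) := fun hx => by
    rw [Real.sqrt_eq_rpow, ← Real.rpow_mul hx, one_div_mul_eq_div]
  rw [componentWeight, ENNReal.ofReal_rpow_of_nonneg (by positivity) hlam,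
    Real.mul_rpow (by positivity) (by positivity), hsqrt hγ, hsqrt hD,
    ← ENNReal.ofReal_mul (by positivity), ← ENNReal.ofReal_one,
    ← ENNReal.ofReal_add zero_le_one (by positivity)]

lemma Bcrit_eq_toReal_criterion [Fact b.Prime] (hα : 2 ≤ α) {γ : ℕ → ℝ} (hγ : ∀ j, 0 ≤ γ j)
    (D : ℝ) (p : (ZMod b)[X]) (τ : ℕ) (q : ℕ → (ZMod b)[X]) :
    Bcrit b α m n γ D p τ q =
      (criterion (componentWeight γ D) (decay b α 1) m n p τ q).toReal := by
  have hb : 1 < b := (Fact.out : b.Prime).one_lt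
  rw [criterion, ENNReal.toReal_sum fun u _ => criterion_term_ne_top
    (componentWeight_ne_top γ D) (tsum_Eset_decay_one_ne_top hb hα) u, Bcrit]
  refine Finset.sum_congr rfl fun u _ => ?_
  rw [ENNReal.toReal_mul, ENNReal.toReal_prod]
  congr 1
  · simp only [componentWeight, ENNReal.toReal_ofReal, mul_nonneg, Real.sqrt_nonneg]
    rw [Finset.prod_mul_distrib, Finset.prod_const, Real.sqrt_prod _ fun j _ => hγ j]
  · simp only [dualSum, prod_decay_one]
    rw [ENNReal.tsum_toReal_eq fun _ => ENNReal.ofReal_ne_top]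
    exact tsum_congr fun f => (ENNReal.toReal_ofReal (by positivity)).symm

lemma increment_le_increment_update_of_Bcrit_le [Fact b.Prime] (hα : 2 ≤ α) {γ : ℕ → ℝ}
    (hγ : ∀ j, 0 ≤ γ j) {D : ℝ} {p : (ZMod b)[X]} {t : ℕ} {q : ℕ → (ZMod b)[X]} {a : (ZMod b)[X]}
    (h : Bcrit b α m n γ D p (t + 1) q ≤
      Bcrit b α m n γ D p (t + 1) (Function.update q t a)) :
    increment (componentWeight γ D) (decay b α 1) m n p t q ≤
      increment (componentWeight γ D) (decay b α 1) m n p t (Function.update q t a) := by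
  have hc := componentWeight_ne_top γ D
  have hw := tsum_Eset_decay_one_ne_top (Fact.out : b.Prime).one_lt hα
  rw [Bcrit_eq_toReal_criterion hα hγ, Bcrit_eq_toReal_criterion hα hγ,
    ENNReal.toReal_le_toReal (criterion_ne_top hc hw) (criterion_ne_top hc hw)] at h
  exact increment_le_increment_update hc hw h

lemma toReal_le_of_rpow_add_le {x : ℝ≥0∞} {B P : ℝ} (hlam : 0 < lam) (hB : 0 ≤ B) (hP : 1 ≤ P)
    (h : x ^ lam + ENNReal.ofReal (B ^ lam) ≤ ENNReal.ofReal (B ^ lam) * ENNReal.ofReal P) :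
    x.toReal ≤ B * (-1 + P) ^ (1 / lam) := by
  have hP0 : 0 ≤ -1 + P := by linarith
  have hrpow : x ^ lam ≤ ENNReal.ofReal (B ^ lam * (-1 + P)) := by
    refine (ENNReal.add_le_add_iff_right (ENNReal.ofReal_ne_top (r := B ^ lam))).1 (h.trans_eq ?_)
    rw [← ENNReal.ofReal_mul (by positivity), ← ENNReal.ofReal_add (by positivity) (by positivity)]
    congr 1
    ring
  refine ENNReal.toReal_le_of_le_ofReal (by positivity) ?_
  rw [← ENNReal.rpow_le_rpow_iff hlam, ENNReal.ofReal_rpow_of_nonneg (by positivity) hlam.le,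
    Real.mul_rpow hB (by positivity), ← Real.rpow_mul hP0, one_div_mul_cancel hlam.ne',
    Real.rpow_one]
  exact hrpow

end Main

/-- Component-by-component construction of folded higher order polynomial lattice
rules: the CBC algorithm yields, for every `1 ≤ τ ≤ s` and every `1/α < λ ≤ 1`, the
bound `B_α(q_τ, p) ≤ b^{-min(m/λ, 2n)} [-1 + ∏_{j=1}^τ (1 + γ_j^{λ/2} D^{λ/2} A_{α,b,λ})]^{1/λ}`. -/
theorem cbc_bound (b α m n s : ℕ) [Fact b.Prime] (hα : 2 ≤ α) (hm : 0 < m) (hmn : m ≤ n)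
    (hs : 0 < s) (p : Polynomial (ZMod b)) (hp : Irreducible p)
    (hpdeg : p.degree = (n : WithBot ℕ))
    (γ : ℕ → ℝ) (hγ : ∀ j, 0 ≤ γ j) (D : ℝ) (hD : 0 < D)
    (q : ℕ → Polynomial (ZMod b))
    (hq : ∀ τ, 1 ≤ τ → τ ≤ s → (q (τ - 1)).degree < (n : WithBot ℕ) ∧
      ∀ q' : Polynomial (ZMod b), q'.degree < (n : WithBot ℕ) →
        Bcrit b α m n γ D p τ q ≤ Bcrit b α m n γ D p τ (Function.update q (τ - 1) q')) :
    ∀ τ, 1 ≤ τ → τ ≤ s → ∀ lam : ℝ, 1 / (α : ℝ) < lam → lam ≤ 1 →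
      Bcrit b α m n γ D p τ q ≤
        (b : ℝ) ^ (-(min ((m : ℝ) / lam) (2 * n))) *
          (-1 + ∏ j ∈ Finset.range τ,
            (1 + γ j ^ (lam / 2) * D ^ (lam / 2) * (A1 b α lam + A2 b α lam))) ^ (1 / lam) := by
  intro τ _ hτs lam hlam hlam1
  have hb : 1 < b := (Fact.out : b.Prime).one_lt
  have hlam0 : 0 < lam := lt_of_le_of_lt (by positivity) hlam
  have hA1 : 0 ≤ A1 b α lam := A1_nonneg hb (by lia) hlam
  have hA2 : 0 ≤ A2 b α lam := A2_nonneg hb hα hlam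
  have hmin : ∀ t < τ, ∀ a : (ZMod b)[X], a.degree < (n : WithBot ℕ) →
      increment (componentWeight γ D) (decay b α 1) m n p t q ≤
        increment (componentWeight γ D) (decay b α 1) m n p t (Function.update q t a) :=
    fun t ht a ha => increment_le_increment_update_of_Bcrit_le hα hγ
      ((hq (t + 1) t.succ_pos (ht.trans_le hτs)).2 a ha)
  have hfactor : ∀ j, 0 ≤ γ j ^ (lam / 2) * D ^ (lam / 2) * (A1 b α lam + A2 b α lam) := fun j =>
    mul_nonneg (mul_nonneg (Real.rpow_nonneg (hγ j) _) (by positivity)) (by positivity)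
  rw [Bcrit_eq_toReal_criterion hα hγ]
  refine toReal_le_of_rpow_add_le hlam0 (by positivity)
    (Finset.one_le_prod fun j _ => le_add_of_nonneg_right (hfactor j)) ?_
  rw [ENNReal.ofReal_prod_of_nonneg fun j _ => add_nonneg zero_le_one (hfactor j)]
  simp only [← one_add_componentWeight_rpow_mul (hγ _) hD.le (add_nonneg hA1 hA2) hlam0.le]
  refine criterion_rpow_add_le hp hpdeg hlam0 hlam1 ?_ ?_ hmin
  · simp only [decay_one_rpow b α hlam0.le]
    exact (tsum_Eset_decay_le hb (by lia) hlam).trans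
      (ENNReal.ofReal_le_ofReal (le_add_of_nonneg_right hA2))
  · simp only [decay_one_rpow b α hlam0.le]
    exact tsum_hitBound_mul_decay_le hb hα hlam (hm.trans_le hmn) hmn

end QMC
end
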